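/- arXiv:1912.08758 — 6 statements merged into one kernel-verified Lean document; each statement's English description precedes it below -/
import Mathlib

section
/- One-step comparison of the relative and unrelativized value iterations: let J_0 = V_0 be continuous and strictly positive on S, let J_n be generated by the VI with constant Λ > 0 and V_n by the RVI with reference point x_0. Then for every n (assuming J_n, V_n are strictly positive), sup_{x∈S} V_{n+1}(x)/J_{n+1}(x) ≤ (Λ / V_n(x_0)) · sup_{x∈S} V_n(x)/J_n(x), and inf_{x∈S} V_{n+1}(x)/J_{n+1}(x) ≥ (Λ / V_n(x_0)) · inf_{x∈S} V_n(x)/J_n(x). -/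
open MeasureTheory Filter Topology

/-!
Both iterations apply the same operator `T f x = inf_u e^{k(x,u)} ∫ f dp(·|x,u)` and then rescale,
by `Λ⁻¹` and by `V_n(x₀)⁻¹` respectively. Since `T` is monotone and positively homogeneous, the
bounds `(inf f/g) g ≤ f ≤ (sup f/g) g` between positive functions pass to `T f` and `T g`, so `T`
does not increase the supremum of a ratio nor decrease its infimum; the two scalings contribute
the factor `Λ / V_n(x₀)`. A bound on `V_0 / J_0` thereby propagates to every `V_n / J_n`, so the
suprema involved are finite.
-/

/-- The multiplicative dynamic programming operator of risk-sensitive control: the cost `k` enters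
through the weight `exp (k x u)`, and `p x u` is the law of the next state. The infimum and the
Bochner integral are real-valued: the integral of a non-integrable function and the infimum of a
family unbounded below are `0`. -/
noncomputable def riskSensitiveBellman {S U : Type*} [MeasurableSpace S] (p : S → U → Measure S)
    (k : S → U → ℝ) (f : S → ℝ) (x : S) : ℝ :=
  ⨅ u, Real.exp (k x u) * ∫ y, f y ∂(p x u)

section Bellman

variable {S U : Type*} [MeasurableSpace S] {p : S → U → Measure S} {k : S → U → ℝ}
  {f g : S → ℝ} {x : S}

lemma riskSensitiveBellman_const_mul {c : ℝ} (hc : 0 ≤ c) :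
    riskSensitiveBellman p k (fun y => c * f y) x = c * riskSensitiveBellman p k f x := by
  simp only [riskSensitiveBellman, integral_const_mul, Real.mul_iInf_of_nonneg hc, mul_left_comm c]

lemma bddBelow_range_exp_mul_integral (hf : 0 ≤ f) :
    BddBelow (Set.range fun u => Real.exp (k x u) * ∫ y, f y ∂(p x u)) :=
  ⟨0, Set.forall_mem_range.2 fun _ => mul_nonneg (Real.exp_nonneg _) (integral_nonneg hf)⟩

-- A non-integrable function has Bochner integral `0`, which would make the infimum nonpositive.
lemma integrable_of_riskSensitiveBellman_pos (hf : 0 ≤ f)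
    (hT : 0 < riskSensitiveBellman p k f x) (u : U) : Integrable f (p x u) := by
  by_contra hfu
  refine hT.not_ge ((ciInf_le (bddBelow_range_exp_mul_integral hf) u).trans_eq ?_)
  rw [integral_undef hfu, mul_zero]

lemma riskSensitiveBellman_mono (hf : 0 ≤ f) (hfg : f ≤ g) (hg : ∀ u, Integrable g (p x u)) :
    riskSensitiveBellman p k f x ≤ riskSensitiveBellman p k g x :=
  ciInf_mono (bddBelow_range_exp_mul_integral hf) fun u => mul_le_mul_of_nonneg_left
    (integral_mono_of_nonneg (.of_forall hf) (hg u) (.of_forall hfg)) (Real.exp_nonneg _)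

lemma riskSensitiveBellman_div_le_iSup_div (hf : 0 ≤ f) (hg : ∀ y, 0 < g y)
    (hbdd : BddAbove (Set.range fun y => f y / g y))
    (hTg : 0 < riskSensitiveBellman p k g x) :
    riskSensitiveBellman p k f x / riskSensitiveBellman p k g x ≤ ⨆ y, f y / g y := by
  set c := ⨆ y, f y / g y
  have hc : 0 ≤ c := Real.iSup_nonneg fun y => div_nonneg (hf y) (hg y).le
  have hfg : f ≤ fun y => c * g y := fun y => (div_le_iff₀ (hg y)).1 (le_ciSup hbdd y)
  have hg_int := integrable_of_riskSensitiveBellman_pos (fun y => (hg y).le) hTg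
  rw [div_le_iff₀ hTg, ← riskSensitiveBellman_const_mul hc]
  exact riskSensitiveBellman_mono hf hfg fun u => (hg_int u).const_mul c

lemma iInf_div_le_riskSensitiveBellman_div (hf : 0 ≤ f) (hg : ∀ y, 0 < g y)
    (hTf : 0 < riskSensitiveBellman p k f x) (hTg : 0 < riskSensitiveBellman p k g x) :
    ⨅ y, f y / g y ≤ riskSensitiveBellman p k f x / riskSensitiveBellman p k g x := by
  have hnonneg : ∀ y, 0 ≤ f y / g y := fun y => div_nonneg (hf y) (hg y).le
  set c := ⨅ y, f y / g y
  have hc : 0 ≤ c := Real.iInf_nonneg hnonneg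
  have hgf : (fun y => c * g y) ≤ f := fun y =>
    (le_div_iff₀ (hg y)).1 (ciInf_le ⟨0, Set.forall_mem_range.2 hnonneg⟩ y)
  rw [le_div_iff₀ hTg, ← riskSensitiveBellman_const_mul hc]
  exact riskSensitiveBellman_mono (fun y => mul_nonneg hc (hg y).le) hgf
    (integrable_of_riskSensitiveBellman_pos hf hTf)

end Bellman

theorem rvi_vi_one_step_comparison_general {S U : Type*} [MeasurableSpace S]
    (p : S → U → Measure S) (k : S → U → ℝ) (Λ : ℝ) (hΛ : 0 < Λ) (x₀ : S) (J V : ℕ → S → ℝ)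
    (hbdd : BddAbove (Set.range fun x => V 0 x / J 0 x))
    (hJ : ∀ n x, J (n + 1) x = Λ⁻¹ * riskSensitiveBellman p k (J n) x)
    (hV : ∀ n x, V (n + 1) x = (V n x₀)⁻¹ * riskSensitiveBellman p k (V n) x)
    (hJpos : ∀ n x, 0 < J n x) (hVpos : ∀ n x, 0 < V n x) (n : ℕ) :
    (⨆ x, V (n + 1) x / J (n + 1) x) ≤ (Λ / V n x₀) * ⨆ x, V n x / J n x ∧
      (Λ / V n x₀) * (⨅ x, V n x / J n x) ≤ ⨅ x, V (n + 1) x / J (n + 1) x := by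
  have : Nonempty S := ⟨x₀⟩
  have hscale n : 0 ≤ Λ / V n x₀ := (div_pos hΛ (hVpos n x₀)).le
  have hTJ n x : 0 < riskSensitiveBellman p k (J n) x :=
    pos_of_mul_pos_right (hJ n x ▸ hJpos (n + 1) x) (inv_pos.2 hΛ).le
  have hTV n x : 0 < riskSensitiveBellman p k (V n) x :=
    pos_of_mul_pos_right (hV n x ▸ hVpos (n + 1) x) (inv_pos.2 (hVpos n x₀)).le
  have hratio n x : V (n + 1) x / J (n + 1) x = (Λ / V n x₀) *
      (riskSensitiveBellman p k (V n) x / riskSensitiveBellman p k (J n) x) := by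
    rw [hV, hJ, mul_div_mul_comm, inv_div_inv]
  have hstep n (hn : BddAbove (Set.range fun x => V n x / J n x)) x :
      V (n + 1) x / J (n + 1) x ≤ (Λ / V n x₀) * ⨆ y, V n y / J n y :=
    (hratio n x).trans_le <| mul_le_mul_of_nonneg_left
      (riskSensitiveBellman_div_le_iSup_div (fun y => (hVpos n y).le) (hJpos n) hn (hTJ n x))
      (hscale n)
  have hbdd_all n : BddAbove (Set.range fun x => V n x / J n x) := by
    induction n with
    | zero => exact hbdd
    | succ n ih => exact ⟨_, Set.forall_mem_range.2 (hstep n ih)⟩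
  refine ⟨ciSup_le (hstep n (hbdd_all n)), le_ciInf fun x => ?_⟩
  rw [hratio]
  exact mul_le_mul_of_nonneg_left (iInf_div_le_riskSensitiveBellman_div
    (fun y => (hVpos n y).le) (hJpos n) (hTV n x) (hTJ n x)) (hscale n)

/-- **One-step comparison of the relative and unrelativized value iterations.**
`J` is generated by the value iteration (VI) with constant `Λ > 0`, and `V` by the
relative value iteration (RVI) with reference point `x₀`, both starting from the
same continuous strictly positive `J 0 = V 0`.  Then for every `n` (assuming the
iterates are strictly positive),
`sup_x V (n+1) x / J (n+1) x ≤ (Λ / V n x₀) * sup_x V n x / J n x` and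
`inf_x V (n+1) x / J (n+1) x ≥ (Λ / V n x₀) * inf_x V n x / J n x`. -/
theorem rvi_vi_one_step_comparison
    {S U : Type*} [MetricSpace S] [CompactSpace S] [MeasurableSpace S] [BorelSpace S]
    [MetricSpace U] [CompactSpace U] [Nonempty U]
    (γ : Measure S) [IsFiniteMeasure γ]
    (hγ : ∀ O : Set S, IsOpen O → O.Nonempty → 0 < γ O)
    (φ : S → U → S → ℝ)
    (hφc : Continuous fun q : S × U × S => φ q.1 q.2.1 q.2.2)
    (hφpos : ∀ x u y, 0 < φ x u y)
    (p : S → U → Measure S)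
    (hp : ∀ x u, p x u = γ.withDensity fun y => ENNReal.ofReal (φ x u y))
    (hprob : ∀ x u, IsProbabilityMeasure (p x u))
    (k : S → U → ℝ) (hk : Continuous fun q : S × U => k q.1 q.2)
    (Λ : ℝ) (hΛ : 0 < Λ) (x₀ : S)
    (J V : ℕ → S → ℝ)
    (hJ0c : Continuous (J 0)) (hJ0pos : ∀ x, 0 < J 0 x) (hJV0 : J 0 = V 0)
    (hJ : ∀ n x, J (n + 1) x = Λ⁻¹ * ⨅ u : U, Real.exp (k x u) * ∫ y, J n y ∂(p x u))
    (hV : ∀ n x, V (n + 1) x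
        = (V n x₀)⁻¹ * ⨅ u : U, Real.exp (k x u) * ∫ y, V n y ∂(p x u))
    (hJpos : ∀ n x, 0 < J n x) (hVpos : ∀ n x, 0 < V n x) :
    ∀ n : ℕ,
      (⨆ x : S, V (n + 1) x / J (n + 1) x) ≤ (Λ / V n x₀) * ⨆ x : S, V n x / J n x ∧
      (Λ / V n x₀) * (⨅ x : S, V n x / J n x) ≤ ⨅ x : S, V (n + 1) x / J (n + 1) x := by
  have hbdd : BddAbove (Set.range fun x => V 0 x / J 0 x) :=
    ⟨1, Set.forall_mem_range.2 fun x => hJV0 ▸ div_self_le_one (J 0 x)⟩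
  exact rvi_vi_one_step_comparison_general p k Λ hΛ x₀ J V hbdd hJ hV hJpos hVpos
end

section
/- The oscillation of the ratio of the RVI to the VI iterates is nonincreasing: with J_0 = V_0 continuous and strictly positive, J_n generated by the VI with constant Λ > 0 and V_n by the RVI with reference point x_0, for every n one has 1 ≤ [sup_{x∈S} V_{n+1}(x)/J_{n+1}(x)] / [inf_{x∈S} V_{n+1}(x)/J_{n+1}(x)] ≤ [sup_{x∈S} V_n(x)/J_n(x)] / [inf_{x∈S} V_n(x)/J_n(x)]; consequently, since this ratio equals 1 at n = 0, for every n the function x ↦ V_n(x)/J_n(x) is constant on S. -/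
/-!
The Bellman operator `T f x = inf_u e^{k(x,u)} ∫ f dp(x,u)` is monotone and positively homogeneous,
so `m * g ≤ f ≤ M * g` implies `m * T g ≤ T f ≤ M * T g`: with `m` and `M` the infimum and the
supremum of `f / g`, the quotient `sup / inf` of `T f / T g` is at most `M / m`. The positive
factors by which VI and RVI rescale `T` cancel in this quotient. A positive continuous function is
constant exactly when its quotient `sup / inf` equals `1`, so a ratio that is constant initially
stays constant.
-/

open MeasureTheory Filter Topology

section MulOscillation

variable {X : Type*}

/-- The multiplicative oscillation `sup r / inf r`, the exponential of the oscillation of `log r`.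
It is meant for bounded `r` with positive infimum: otherwise `sup`, `inf` or the division may take a
junk value. -/
noncomputable def mulOscillation (r : X → ℝ) : ℝ :=
  (⨆ x, r x) / ⨅ x, r x

theorem mulOscillation_const_mul {c : ℝ} (hc : 0 < c) (r : X → ℝ) :
    mulOscillation (fun x => c * r x) = mulOscillation r := by
  simp only [mulOscillation, ← Real.mul_iSup_of_nonneg hc.le, ← Real.mul_iInf_of_nonneg hc.le,
    mul_div_mul_left _ _ hc.ne']

theorem mulOscillation_le_div [Nonempty X] {r : X → ℝ} {m M : ℝ} (hm : 0 < m)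
    (hmr : ∀ x, m ≤ r x) (hrM : ∀ x, r x ≤ M) : mulOscillation r ≤ M / m := by
  have hM : 0 ≤ M := (hm.le.trans (hmr (Classical.arbitrary X))).trans (hrM _)
  exact div_le_div₀ hM (ciSup_le hrM) hm (le_ciInf hmr)

variable [TopologicalSpace X] [CompactSpace X] [Nonempty X] {r : X → ℝ}

theorem iInf_pos_of_continuous (hr : Continuous r) (hr_pos : ∀ x, 0 < r x) : 0 < ⨅ x, r x := by
  obtain ⟨x, -, hx⟩ := isCompact_univ.exists_isMinOn Set.univ_nonempty hr.continuousOn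
  exact (hr_pos x).trans_le (le_ciInf fun y => hx (Set.mem_univ y))

theorem one_le_mulOscillation (hr : Continuous r) (hr_pos : ∀ x, 0 < r x) :
    1 ≤ mulOscillation r :=
  (one_le_div (iInf_pos_of_continuous hr hr_pos)).2 <|
    ciInf_le_ciSup (isCompact_range hr).bddBelow (isCompact_range hr).bddAbove

theorem mulOscillation_eq_one_iff (hr : Continuous r) (hr_pos : ∀ x, 0 < r x) :
    mulOscillation r = 1 ↔ ∀ x y, r x = r y := by
  have hinf := iInf_pos_of_continuous hr hr_pos
  constructor
  · intro h
    have hsup : ⨆ x, r x = ⨅ x, r x := (div_eq_one_iff_eq hinf.ne').1 h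
    have hle (x y : X) : r x ≤ r y :=
      calc r x ≤ ⨆ z, r z := le_ciSup (isCompact_range hr).bddAbove x
        _ = ⨅ z, r z := hsup
        _ ≤ r y := ciInf_le (isCompact_range hr).bddBelow y
    exact fun x y => (hle x y).antisymm (hle y x)
  · intro h
    obtain ⟨x₁⟩ := ‹Nonempty X›
    have hle : mulOscillation r ≤ r x₁ / r x₁ :=
      mulOscillation_le_div (hr_pos x₁) (fun x => (h x₁ x).le) fun x => (h x x₁).le
    exact (hle.trans_eq (div_self (hr_pos x₁).ne')).antisymm (one_le_mulOscillation hr hr_pos)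

end MulOscillation

section Bellman

variable {S U : Type*} [MeasurableSpace S]

/-- The Bellman operator of multiplicative (risk-sensitive) cost control, with running cost `k` and
controlled transition kernel `p`; VI and RVI iterate it up to a positive normalization. -/
noncomputable def bellmanOperator (k : S → U → ℝ) (p : S → U → Measure S) (f : S → ℝ) (x : S) :
    ℝ :=
  ⨅ u, Real.exp (k x u) * ∫ y, f y ∂p x u

theorem bellmanOperator_const_mul (k : S → U → ℝ) (p : S → U → Measure S) {c : ℝ} (hc : 0 ≤ c)
    (f : S → ℝ) (x : S) :
    bellmanOperator k p (fun y => c * f y) x = c * bellmanOperator k p f x := by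
  simp only [bellmanOperator, integral_const_mul, Real.mul_iInf_of_nonneg hc, mul_left_comm c]

variable [TopologicalSpace S] [TopologicalSpace U]

/-- The (weak) Feller property of a controlled kernel: integrating a continuous function against it
gives a function jointly continuous in state and control. The test functions are not required to be
bounded, which makes no difference on a compact state space. -/
def IsFeller (p : S → U → Measure S) : Prop :=
  ∀ f : S → ℝ, Continuous f → Continuous fun q : S × U => ∫ y, f y ∂p q.1 q.2

theorem isFeller_withDensity [CompactSpace S] [FirstCountableTopology S] [LocallyCompactSpace S]
    [FirstCountableTopology U] [LocallyCompactSpace U] [OpensMeasurableSpace S]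
    (γ : Measure S) [IsLocallyFiniteMeasure γ] {φ : S → U → S → ℝ}
    (hφ : Continuous fun q : S × U × S => φ q.1 q.2.1 q.2.2) :
    IsFeller fun x u => γ.withDensity fun y => ENNReal.ofReal (φ x u y) := by
  intro f hf
  have hdensity (q : S × U) :
      ∫ y, f y ∂γ.withDensity (fun y => ENNReal.ofReal (φ q.1 q.2 y))
        = ∫ y, max (φ q.1 q.2 y) 0 * f y ∂γ := by
    have hφq : Continuous (φ q.1 q.2) := by fun_prop
    rw [integral_withDensity_eq_integral_toReal_smul hφq.measurable.ennreal_ofReal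
      (.of_forall fun _ => ENNReal.ofReal_lt_top)]
    simp only [ENNReal.toReal_ofReal', smul_eq_mul]
  simp only [hdensity]
  have hφf : Continuous (Function.uncurry fun (q : S × U) y => max (φ q.1 q.2 y) 0 * f y) := by
    fun_prop
  simpa only [Measure.restrict_univ] using
    continuous_parametric_integral_of_continuous (μ := γ) hφf isCompact_univ

variable {k : S → U → ℝ} {p : S → U → Measure S} {f g : S → ℝ}

theorem continuous_exp_mul_integral (hk : Continuous k.uncurry)
    (hp : IsFeller p) (hf : Continuous f) :
    Continuous fun q : S × U => Real.exp (k q.1 q.2) * ∫ y, f y ∂p q.1 q.2 :=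
  (Real.continuous_exp.comp hk).mul (hp f hf)

theorem continuous_bellmanOperator [CompactSpace U] (hk : Continuous k.uncurry) (hp : IsFeller p)
    (hf : Continuous f) : Continuous (bellmanOperator k p f) := by
  have h := isCompact_univ.continuous_sInf (K := (Set.univ : Set U))
    (f := fun x u => Real.exp (k x u) * ∫ y, f y ∂p x u) (continuous_exp_mul_integral hk hp hf)
  simpa only [Set.image_univ, sInf_range, bellmanOperator] using! h

variable [CompactSpace S] [OpensMeasurableSpace S]

theorem integrable_of_continuous {μ : Measure S} [IsFiniteMeasureOnCompacts μ]
    (hf : Continuous f) : Integrable f μ :=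
  hf.integrable_of_hasCompactSupport (.of_compactSpace f)

variable [CompactSpace U] [∀ x u, IsFiniteMeasure (p x u)]

theorem bellmanOperator_mono (hk : Continuous k.uncurry) (hp : IsFeller p)
    (hf : Continuous f) (hg : Continuous g) (hfg : ∀ y, f y ≤ g y) (x : S) :
    bellmanOperator k p f x ≤ bellmanOperator k p g x := by
  have hcont := (continuous_exp_mul_integral hk hp hf).comp (Continuous.prodMk_right x)
  refine ciInf_mono (isCompact_range hcont).bddBelow fun u =>
    mul_le_mul_of_nonneg_left ?_ (Real.exp_pos _).le
  exact integral_mono (integrable_of_continuous hf) (integrable_of_continuous hg) hfg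

variable [Nonempty U] [∀ x u, NeZero (p x u)]

theorem bellmanOperator_pos (hk : Continuous k.uncurry) (hp : IsFeller p) (hf : Continuous f)
    (hf_pos : ∀ y, 0 < f y) (x : S) :
    0 < bellmanOperator k p f x := by
  have hcont := (continuous_exp_mul_integral hk hp hf).comp (Continuous.prodMk_right x)
  refine iInf_pos_of_continuous hcont fun u => mul_pos (Real.exp_pos _) ?_
  have hsupp : Function.support f = Set.univ :=
    Function.support_eq_univ fun y => (hf_pos y).ne'
  rw [integral_pos_iff_support_of_nonneg (fun y => (hf_pos y).le)
    (integrable_of_continuous hf), hsupp]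
  exact Measure.measure_univ_pos.2 (NeZero.ne _)

theorem mulOscillation_bellmanOperator_div_le [Nonempty S]
    (hk : Continuous k.uncurry) (hp : IsFeller p) (hf : Continuous f) (hf_pos : ∀ y, 0 < f y)
    (hg : Continuous g) (hg_pos : ∀ y, 0 < g y) :
    mulOscillation (fun x => bellmanOperator k p f x / bellmanOperator k p g x)
      ≤ mulOscillation fun x => f x / g x := by
  have hr : Continuous fun x => f x / g x := hf.div hg fun x => (hg_pos x).ne'
  have hm : 0 < ⨅ x, f x / g x := iInf_pos_of_continuous hr fun x => div_pos (hf_pos x) (hg_pos x)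
  have hM : 0 ≤ ⨆ x, f x / g x := Real.iSup_nonneg fun x => (div_pos (hf_pos x) (hg_pos x)).le
  have hTg := bellmanOperator_pos hk hp hg hg_pos
  have hlower (y : S) : (⨅ x, f x / g x) * g y ≤ f y :=
    (le_div_iff₀ (hg_pos y)).1 (ciInf_le (isCompact_range hr).bddBelow y)
  have hupper (y : S) : f y ≤ (⨆ x, f x / g x) * g y :=
    (div_le_iff₀ (hg_pos y)).1 (le_ciSup (isCompact_range hr).bddAbove y)
  refine mulOscillation_le_div hm (fun x => ?_) fun x => ?_
  · rw [le_div_iff₀ (hTg x), ← bellmanOperator_const_mul k p hm.le]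
    exact bellmanOperator_mono hk hp (hg.const_mul _) hf hlower x
  · rw [div_le_iff₀ (hTg x), ← bellmanOperator_const_mul k p hM]
    exact bellmanOperator_mono hk hp hf (hg.const_mul _) hupper x

theorem continuous_and_pos_of_bellman_recursion
    (hk : Continuous k.uncurry) (hp : IsFeller p) {c : (S → ℝ) → ℝ}
    (hc : ∀ f : S → ℝ, (∀ x, 0 < f x) → 0 < c f) {W : ℕ → S → ℝ}
    (hW₀ : Continuous (W 0)) (hW₀_pos : ∀ x, 0 < W 0 x)
    (hW : ∀ n x, W (n + 1) x = c (W n) * bellmanOperator k p (W n) x) (n : ℕ) :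
    Continuous (W n) ∧ ∀ x, 0 < W n x := by
  induction n with
  | zero => exact ⟨hW₀, hW₀_pos⟩
  | succ n ih =>
    obtain ⟨hcont, hpos⟩ := ih
    rw [funext (hW n)]
    exact ⟨(continuous_bellmanOperator hk hp hcont).const_mul _,
      fun x => mul_pos (hc _ hpos) (bellmanOperator_pos hk hp hcont hpos x)⟩

end Bellman

theorem rvi_vi_ratio_oscillation_nonincreasing_general
    {S U : Type*} [TopologicalSpace S] [CompactSpace S] [MeasurableSpace S] [OpensMeasurableSpace S]
    [TopologicalSpace U] [CompactSpace U] [Nonempty U]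
    {p : S → U → Measure S} [∀ x u, IsFiniteMeasure (p x u)] [∀ x u, NeZero (p x u)]
    (hp : IsFeller p) {k : S → U → ℝ} (hk : Continuous k.uncurry) {Λ : ℝ} (hΛ : 0 < Λ) (x₀ : S)
    {J V : ℕ → S → ℝ} (hJ₀ : Continuous (J 0)) (hJ₀_pos : ∀ x, 0 < J 0 x)
    (hV₀ : Continuous (V 0)) (hV₀_pos : ∀ x, 0 < V 0 x)
    (hJ : ∀ n x, J (n + 1) x = Λ⁻¹ * bellmanOperator k p (J n) x)
    (hV : ∀ n x, V (n + 1) x = (V n x₀)⁻¹ * bellmanOperator k p (V n) x) :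
    (∀ n, 1 ≤ mulOscillation (fun x => V (n + 1) x / J (n + 1) x) ∧
      mulOscillation (fun x => V (n + 1) x / J (n + 1) x)
        ≤ mulOscillation fun x => V n x / J n x) ∧
    ((∀ x y, V 0 x / J 0 x = V 0 y / J 0 y) → ∀ n x y, V n x / J n x = V n y / J n y) := by
  have : Nonempty S := ⟨x₀⟩
  have hJn := continuous_and_pos_of_bellman_recursion hk hp (c := fun _ => Λ⁻¹)
    (fun _ _ => inv_pos.2 hΛ) hJ₀ hJ₀_pos hJ
  have hVn := continuous_and_pos_of_bellman_recursion hk hp (c := fun f => (f x₀)⁻¹)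
    (fun _ hf => inv_pos.2 (hf x₀)) hV₀ hV₀_pos hV
  have hr (n : ℕ) : Continuous fun x => V n x / J n x :=
    (hVn n).1.div (hJn n).1 fun x => ((hJn n).2 x).ne'
  have hr_pos (n : ℕ) (x : S) : 0 < V n x / J n x := div_pos ((hVn n).2 x) ((hJn n).2 x)
  have hone (n : ℕ) := one_le_mulOscillation (hr n) (hr_pos n)
  have hstep (n : ℕ) : mulOscillation (fun x => V (n + 1) x / J (n + 1) x)
      ≤ mulOscillation fun x => V n x / J n x := by
    simp only [hJ, hV, mul_div_mul_comm]
    rw [mulOscillation_const_mul (div_pos (inv_pos.2 ((hVn n).2 x₀)) (inv_pos.2 hΛ))]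
    exact mulOscillation_bellmanOperator_div_le hk hp (hVn n).1 (hVn n).2 (hJn n).1 (hJn n).2
  refine ⟨fun n => ⟨hone (n + 1), hstep n⟩, fun h₀ n => ?_⟩
  rw [← mulOscillation_eq_one_iff (hr _) (hr_pos _)] at h₀ ⊢
  have hanti : Antitone fun n => mulOscillation fun x => V n x / J n x :=
    antitone_nat_of_succ_le hstep
  exact ((hanti n.zero_le).trans_eq h₀).antisymm (hone n)

/-- **The oscillation of the ratio of the RVI to the VI iterates is nonincreasing**,
and consequently the ratio `V n / J n` is constant on `S` for every `n`. -/
theorem rvi_vi_ratio_oscillation_nonincreasing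
    {S U : Type*} [MetricSpace S] [CompactSpace S] [MeasurableSpace S] [BorelSpace S]
    [MetricSpace U] [CompactSpace U] [Nonempty U]
    (γ : Measure S) [IsFiniteMeasure γ]
    (hγ : ∀ O : Set S, IsOpen O → O.Nonempty → 0 < γ O)
    (φ : S → U → S → ℝ)
    (hφc : Continuous fun q : S × U × S => φ q.1 q.2.1 q.2.2)
    (hφpos : ∀ x u y, 0 < φ x u y)
    (p : S → U → Measure S)
    (hp : ∀ x u, p x u = γ.withDensity fun y => ENNReal.ofReal (φ x u y))
    (hprob : ∀ x u, IsProbabilityMeasure (p x u))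
    (k : S → U → ℝ) (hk : Continuous fun q : S × U => k q.1 q.2)
    (Λ : ℝ) (hΛ : 0 < Λ) (x₀ : S)
    (J V : ℕ → S → ℝ)
    (hJ0c : Continuous (J 0)) (hJ0pos : ∀ x, 0 < J 0 x) (hJV0 : J 0 = V 0)
    (hJ : ∀ n x, J (n + 1) x = Λ⁻¹ * ⨅ u : U, Real.exp (k x u) * ∫ y, J n y ∂(p x u))
    (hV : ∀ n x, V (n + 1) x
        = (V n x₀)⁻¹ * ⨅ u : U, Real.exp (k x u) * ∫ y, V n y ∂(p x u)) :
    (∀ n : ℕ,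
      1 ≤ (⨆ x : S, V (n + 1) x / J (n + 1) x) / (⨅ x : S, V (n + 1) x / J (n + 1) x) ∧
      (⨆ x : S, V (n + 1) x / J (n + 1) x) / (⨅ x : S, V (n + 1) x / J (n + 1) x)
        ≤ (⨆ x : S, V n x / J n x) / (⨅ x : S, V n x / J n x)) ∧
    ∀ (n : ℕ) (x y : S), V n x / J n x = V n y / J n y := by
  obtain rfl : p = fun x u => γ.withDensity fun y => ENNReal.ofReal (φ x u y) := funext₂ hp
  exact (rvi_vi_ratio_oscillation_nonincreasing_general (isFeller_withDensity γ hφc) hk hΛ x₀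
    hJ0c hJ0pos (hJV0 ▸ hJ0c) (hJV0 ▸ hJ0pos) hJ hV).imp_right fun h => h fun x y => by
      rw [← hJV0, div_self (hJ0pos x).ne', div_self (hJ0pos y).ne']
end

section
/- Proportionality of the RVI and VI iterates: with J_0 = V_0 continuous and strictly positive, J_n generated by the VI with constant Λ > 0 and V_n by the RVI with reference point x_0, for every n ≥ 0 and every x ∈ S one has V_n(x) = C_n · J_n(x), where C_0 = 1 and C_n = ∏_{m=0}^{n-1} Λ / V_m(x_0). -/
open MeasureTheory Filter Topology

/-!
The VI and the RVI iterate the same operator, which commutes with multiplication by nonnegative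
constants, and differ only in the scalar applied after each step. These scalars can be pulled out
of all later steps, so the two sequences stay on a common ray; the scalars at step `m` are `Λ⁻¹`
and `(V m x₀)⁻¹`, whose ratio is the factor `Λ / V m x₀`.
-/

theorem eq_prod_div_smul_of_smul_map {𝕜 E : Type*} [Field 𝕜] [LinearOrder 𝕜]
    [IsStrictOrderedRing 𝕜] [MulAction 𝕜 E] {T : E → E}
    (hT : ∀ c : 𝕜, 0 ≤ c → ∀ f, T (c • f) = c • T f) {a b : ℕ → 𝕜} (ha : ∀ n, a n ≠ 0)
    (hba : ∀ n, 0 ≤ b n / a n) {J V : ℕ → E} (h0 : V 0 = J 0)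
    (hJ : ∀ n, J (n + 1) = a n • T (J n)) (hV : ∀ n, V (n + 1) = b n • T (V n)) (n : ℕ) :
    V n = (∏ m ∈ Finset.range n, b m / a m) • J n := by
  induction n with
  | zero => simp [h0]
  | succ n ih =>
    set C := ∏ m ∈ Finset.range n, b m / a m with hC
    have hC_nonneg : 0 ≤ C := Finset.prod_nonneg fun m _ => hba m
    calc V (n + 1) = b n • T (C • J n) := by rw [hV, ih]
      _ = (b n * C) • T (J n) := by rw [hT C hC_nonneg, mul_smul]
      _ = (C * (b n / a n) * a n) • T (J n) := by
        rw [mul_assoc, div_mul_cancel₀ _ (ha n), mul_comm]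
      _ = (∏ m ∈ Finset.range (n + 1), b m / a m) • J (n + 1) := by
        rw [Finset.prod_range_succ, ← hC, hJ, mul_smul _ (a n)]

section PositivelyHomogeneous

variable {S : Type*} {T : (S → ℝ) → S → ℝ}

theorem nonneg_of_relative_value_iteration (hT : ∀ f, 0 ≤ f → 0 ≤ T f) {x₀ : S} {V : ℕ → S → ℝ}
    (hV0 : 0 ≤ V 0) (hV : ∀ n, V (n + 1) = (V n x₀)⁻¹ • T (V n)) (n : ℕ) : 0 ≤ V n := by
  induction n with
  | zero => exact hV0
  | succ n ih =>
    rw [hV]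
    exact smul_nonneg (inv_nonneg.mpr (ih x₀)) (hT _ ih)

theorem rvi_vi_proportionality_general (hT_nonneg : ∀ f, 0 ≤ f → 0 ≤ T f)
    (hT_smul : ∀ c : ℝ, 0 ≤ c → ∀ f, T (c • f) = c • T f) {Λ : ℝ} (hΛ : 0 < Λ) (x₀ : S)
    {J V : ℕ → S → ℝ} (hJ0 : 0 ≤ J 0) (hJV0 : J 0 = V 0)
    (hJ : ∀ n, J (n + 1) = Λ⁻¹ • T (J n)) (hV : ∀ n, V (n + 1) = (V n x₀)⁻¹ • T (V n))
    (n : ℕ) (x : S) : V n x = (∏ m ∈ Finset.range n, Λ / V m x₀) * J n x := by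
  have hV_nonneg : ∀ m, 0 ≤ V m :=
    nonneg_of_relative_value_iteration hT_nonneg (hJV0 ▸ hJ0) hV
  have ratio_eq (m : ℕ) : (V m x₀)⁻¹ / Λ⁻¹ = Λ / V m x₀ := inv_div_inv _ _
  have ratio_nonneg (m : ℕ) : 0 ≤ (V m x₀)⁻¹ / Λ⁻¹ :=
    ratio_eq m ▸ div_nonneg hΛ.le (hV_nonneg m x₀)
  have h := eq_prod_div_smul_of_smul_map hT_smul (fun _ => inv_ne_zero hΛ.ne') ratio_nonneg
    hJV0.symm hJ hV n
  simpa only [ratio_eq, Pi.smul_apply, smul_eq_mul] using congrFun h x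

end PositivelyHomogeneous

section MultiplicativeBellman

variable {S U : Type*} [MeasurableSpace S]

/-- The multiplicative Bellman operator of risk-sensitive control with transition kernel `p` and
running cost `k`: one step of the VI or the RVI before normalization. It is defined on all real
functions; the Bochner integral is `0` where `f` is not integrable. -/
noncomputable def multiplicativeBellman (p : S → U → Measure S) (k : S → U → ℝ) (f : S → ℝ)
    (x : S) : ℝ :=
  ⨅ u : U, Real.exp (k x u) * ∫ y, f y ∂(p x u)

theorem multiplicativeBellman_nonneg (p : S → U → Measure S) (k : S → U → ℝ) (f : S → ℝ)
    (hf : 0 ≤ f) : 0 ≤ multiplicativeBellman p k f := fun _ =>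
  Real.iInf_nonneg fun _ => mul_nonneg (Real.exp_pos _).le (integral_nonneg hf)

theorem multiplicativeBellman_smul (p : S → U → Measure S) (k : S → U → ℝ) (c : ℝ) (hc : 0 ≤ c)
    (f : S → ℝ) : multiplicativeBellman p k (c • f) = c • multiplicativeBellman p k f := by
  funext x
  simp only [multiplicativeBellman, Pi.smul_apply, smul_eq_mul, integral_const_mul,
    Real.mul_iInf_of_nonneg hc, mul_left_comm]

end MultiplicativeBellman

/-- **Proportionality of the RVI and VI iterates:**
`V n x = C n * J n x` with `C n = ∏_{m<n} Λ / V m x₀`. -/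
theorem rvi_vi_proportionality
    {S U : Type*} [MetricSpace S] [CompactSpace S] [MeasurableSpace S] [BorelSpace S]
    [MetricSpace U] [CompactSpace U] [Nonempty U]
    (γ : Measure S) [IsFiniteMeasure γ]
    (hγ : ∀ O : Set S, IsOpen O → O.Nonempty → 0 < γ O)
    (φ : S → U → S → ℝ)
    (hφc : Continuous fun q : S × U × S => φ q.1 q.2.1 q.2.2)
    (hφpos : ∀ x u y, 0 < φ x u y)
    (p : S → U → Measure S)
    (hp : ∀ x u, p x u = γ.withDensity fun y => ENNReal.ofReal (φ x u y))
    (hprob : ∀ x u, IsProbabilityMeasure (p x u))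
    (k : S → U → ℝ) (hk : Continuous fun q : S × U => k q.1 q.2)
    (Λ : ℝ) (hΛ : 0 < Λ) (x₀ : S)
    (J V : ℕ → S → ℝ)
    (hJ0c : Continuous (J 0)) (hJ0pos : ∀ x, 0 < J 0 x) (hJV0 : J 0 = V 0)
    (hJ : ∀ n x, J (n + 1) x = Λ⁻¹ * ⨅ u : U, Real.exp (k x u) * ∫ y, J n y ∂(p x u))
    (hV : ∀ n x, V (n + 1) x
        = (V n x₀)⁻¹ * ⨅ u : U, Real.exp (k x u) * ∫ y, V n y ∂(p x u)) :
    ∀ (n : ℕ) (x : S), V n x = (∏ m ∈ Finset.range n, Λ / V m x₀) * J n x :=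
  rvi_vi_proportionality_general (multiplicativeBellman_nonneg p k)
    (multiplicativeBellman_smul p k) hΛ x₀ (fun x => (hJ0pos x).le) hJV0
    (fun n => funext (hJ n)) (fun n => funext (hV n))
end

section
/- Convergence of the value iteration and relative value iteration (main discrete-time theorem): suppose Λ > 0 and a continuous strictly positive V : S → (0,∞) solve the DP equation. Let J_0 = V_0 be continuous and strictly positive, let J_n be generated by the VI with constant Λ and V_n by the RVI with reference point x_0. Then there exists a constant c > 0 such that J_n(x) → c·V(x) as n → ∞ for γ-almost every x ∈ S, and V_n(x) → V̄(x) as n → ∞ for γ-almost every x ∈ S, where V̄ := (Λ / V(x_0))·V is the solution of the DP equation normalized by V̄(x_0) = Λ. -/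
open MeasureTheory Filter Topology

/-!
A positively homogeneous map `T` with `T f + ℓ (g - f) • v ≤ T g` for `f ≤ g` contracts order
intervals around its fixed ray: if `T v = v` and `m • v ≤ f ≤ M • v`, then
`(m + ℓ (f - m • v)) • v ≤ T f ≤ (M + ℓ (f - M • v)) • v`. Both endpoints solve the same affine
recursion, so their distance shrinks by exactly the factor `1 - ℓ v` at each step, and if `0 < ℓ v`
the orbit converges geometrically to a multiple of `v`. For the dynamic programming operator,
compactness bounds the strictly positive density `exp (k x u) * φ x u y` below by `ε * V x`, which
is the required inequality with `ℓ = ε ∫ · ∂γ`. Relative value iterates are positive multiples of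
value iterates, normalised at `x₀`.
-/

section Bracket

variable {E : Type*} [AddCommGroup E] [Module ℝ E]

/-- The coefficients `b n` of the multiples of `v` that bracket an orbit `f` of a Doeblin map
fixing `v`; the same recursion serves for lower and for upper bounds. -/
def bracketCoeff (ℓ : E →ₗ[ℝ] ℝ) (v : E) (f : ℕ → E) (b₀ : ℝ) : ℕ → ℝ
  | 0 => b₀
  | n + 1 => bracketCoeff ℓ v f b₀ n + ℓ (f n - bracketCoeff ℓ v f b₀ n • v)

lemma bracketCoeff_sub (ℓ : E →ₗ[ℝ] ℝ) (v : E) (f : ℕ → E) (m M : ℝ) (n : ℕ) :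
    bracketCoeff ℓ v f M n - bracketCoeff ℓ v f m n = (1 - ℓ v) ^ n * (M - m) := by
  induction n with
  | zero => simp [bracketCoeff]
  | succ n ih =>
    simp only [bracketCoeff, map_sub, map_smul, smul_eq_mul, pow_succ']
    linear_combination (1 - ℓ v) * ih

end Bracket

section OrderedModule

variable {E : Type*} [AddCommGroup E] [PartialOrder E] [Module ℝ E]

/-- A positively homogeneous map satisfying a Doeblin minorization condition: raising its argument
from `f` to `g` raises its value at least by the mass `ℓ (g - f)` in the fixed direction `v`. -/
structure IsDoeblinMap (T : E → E) (ℓ : E →ₗ[ℝ] ℝ) (v : E) : Prop where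
  map_smul : ∀ ⦃c : ℝ⦄, 0 ≤ c → ∀ f, T (c • f) = c • T f
  nonneg : ∀ ⦃f⦄, 0 ≤ f → 0 ≤ ℓ f
  add_smul_le : ∀ ⦃f g⦄, f ≤ g → T f + ℓ (g - f) • v ≤ T g

namespace IsDoeblinMap

variable {T : E → E} {ℓ : E →ₗ[ℝ] ℝ} {v : E}

lemma const_smul [IsOrderedModule ℝ E] (h : IsDoeblinMap T ℓ v) {c : ℝ} (hc : 0 ≤ c) :
    IsDoeblinMap (c • T) (c • ℓ) v where
  map_smul b hb f := by simp only [Pi.smul_apply, h.map_smul hb, smul_comm c b]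
  nonneg f hf := mul_nonneg hc (h.nonneg hf)
  add_smul_le f g hfg := by
    simpa only [Pi.smul_apply, LinearMap.smul_apply, smul_add, smul_assoc]
      using smul_le_smul_of_nonneg_left (h.add_smul_le hfg) hc

lemma add_smul_le_map (h : IsDoeblinMap T ℓ v) (hfix : T v = v) {m : ℝ} (hm : 0 ≤ m) {f : E}
    (hf : m • v ≤ f) : (m + ℓ (f - m • v)) • v ≤ T f := by
  simpa only [h.map_smul hm, hfix, add_smul] using h.add_smul_le hf

variable [IsOrderedAddMonoid E]

lemma map_le_add_smul (h : IsDoeblinMap T ℓ v) (hfix : T v = v) {M : ℝ} (hM : 0 ≤ M) {f : E}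
    (hf : f ≤ M • v) : T f ≤ (M + ℓ (f - M • v)) • v := by
  have hgap := h.add_smul_le hf
  rw [h.map_smul hM, hfix, ← le_sub_iff_add_le, ← sub_smul] at hgap
  rwa [← neg_sub f, map_neg, sub_neg_eq_add] at hgap

variable {f : ℕ → E} {m M : ℝ}

lemma le_bracketCoeff_and_smul_le (h : IsDoeblinMap T ℓ v) (hfix : T v = v)
    (hf : ∀ n, f (n + 1) = T (f n)) (hm : 0 ≤ m) (hf₀ : m • v ≤ f 0) (n : ℕ) :
    m ≤ bracketCoeff ℓ v f m n ∧ bracketCoeff ℓ v f m n • v ≤ f n := by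
  induction n with
  | zero => exact ⟨le_rfl, hf₀⟩
  | succ n ih =>
    obtain ⟨hle, hbound⟩ := ih
    refine ⟨le_add_of_le_of_nonneg hle (h.nonneg (sub_nonneg.2 hbound)), ?_⟩
    exact (h.add_smul_le_map hfix (hm.trans hle) hbound).trans_eq (hf n).symm

variable [IsStrictOrderedModule ℝ E]

lemma apply_le_one (h : IsDoeblinMap T ℓ v) (hfix : T v = v) (hv : 0 < v) : ℓ v ≤ 1 := by
  have hle : ℓ v • v ≤ v := by
    simpa only [zero_smul, sub_zero, zero_add, hfix]
      using h.add_smul_le_map hfix le_rfl (f := v) (by simpa using hv.le)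
  exact (smul_le_iff_le_one_left hv).1 hle

lemma bracketCoeff_le_bracketCoeff (h : IsDoeblinMap T ℓ v) (hfix : T v = v) (hv : 0 < v)
    (hmM : m ≤ M) (n : ℕ) : bracketCoeff ℓ v f m n ≤ bracketCoeff ℓ v f M n := by
  rw [← sub_nonneg, bracketCoeff_sub]
  exact mul_nonneg (pow_nonneg (sub_nonneg.2 (h.apply_le_one hfix hv)) n) (sub_nonneg.2 hmM)

lemma le_smul_bracketCoeff (h : IsDoeblinMap T ℓ v) (hfix : T v = v) (hv : 0 < v)
    (hf : ∀ n, f (n + 1) = T (f n)) (hm : 0 ≤ m) (hmf : m • v ≤ f 0) (hfM : f 0 ≤ M • v)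
    (n : ℕ) : f n ≤ bracketCoeff ℓ v f M n • v := by
  have hmM : m ≤ M := le_of_smul_le_smul_right (hmf.trans hfM) hv
  induction n with
  | zero => exact hfM
  | succ n ih =>
    have hnonneg : 0 ≤ bracketCoeff ℓ v f M n :=
      (hm.trans (h.le_bracketCoeff_and_smul_le hfix hf hm hmf n).1).trans
        (h.bracketCoeff_le_bracketCoeff hfix hv hmM n)
    exact (hf n).trans_le (h.map_le_add_smul hfix hnonneg ih)

lemma exists_sub_smul_mem_Icc (h : IsDoeblinMap T ℓ v) (hfix : T v = v) (hv : 0 < v)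
    (hf : ∀ n, f (n + 1) = T (f n)) (hm : 0 ≤ m) (hmf : m • v ≤ f 0) (hfM : f 0 ≤ M • v) :
    ∃ c, m ≤ c ∧ ∀ n, f n - c • v ∈ Set.Icc (-(((1 - ℓ v) ^ n * (M - m)) • v))
      (((1 - ℓ v) ^ n * (M - m)) • v) := by
  have hmM : m ≤ M := le_of_smul_le_smul_right (hmf.trans hfM) hv
  have hlower := h.le_bracketCoeff_and_smul_le hfix hf hm hmf
  have hupper := h.le_smul_bracketCoeff hfix hv hf hm hmf hfM
  have hmono : Monotone (bracketCoeff ℓ v f m) := monotone_nat_of_le_succ fun n =>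
    le_add_of_nonneg_right (h.nonneg (sub_nonneg.2 (hlower n).2))
  have hanti : Antitone (bracketCoeff ℓ v f M) := antitone_nat_of_succ_le fun n => by
    have hgap := h.nonneg (sub_nonneg.2 (hupper n))
    rw [← neg_sub, map_neg, neg_nonneg] at hgap
    exact add_le_of_nonpos_right hgap
  have hmem := hmono.ciSup_mem_iInter_Icc_of_antitone hanti
    (h.bracketCoeff_le_bracketCoeff hfix hv hmM)
  set c := ⨆ n, bracketCoeff ℓ v f m n
  rw [Set.mem_iInter] at hmem
  refine ⟨c, (hmem 0).1, fun n => ?_⟩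
  rw [← bracketCoeff_sub ℓ v f m M n, Set.mem_Icc, ← neg_smul, le_sub_iff_add_le, sub_le_iff_le_add,
    ← add_smul, ← add_smul]
  obtain ⟨hmc, hcM⟩ := hmem n
  constructor
  · exact (smul_le_smul_of_nonneg_right (by linarith) hv.le).trans (hlower n).2
  · exact (hupper n).trans (smul_le_smul_of_nonneg_right (by linarith) hv.le)

end IsDoeblinMap

end OrderedModule

section RelativeIteration

variable {E : Type*} [AddCommGroup E] [Module ℝ E] {T : E → E} {Λ : ℝ} {J W : ℕ → E}

lemma relativeIterate_succ (hT : ∀ ⦃c : ℝ⦄, 0 ≤ c → ∀ f, T (c • f) = c • T f) (φ : E →ₗ[ℝ] ℝ)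
    (hΛ : 0 < Λ) (hJ : ∀ n, J (n + 1) = Λ⁻¹ • T (J n))
    (hW : ∀ n, W (n + 1) = (φ (W n))⁻¹ • T (W n)) (h₀ : J 0 = W 0) (hpos : ∀ n, 0 < φ (J n))
    (n : ℕ) : W (n + 1) = (Λ / φ (J n)) • J (n + 1) := by
  have succ_eq_smul (n : ℕ) {b : ℝ} (hb : 0 < b) (hWJ : W n = b • J n) :
      W (n + 1) = (Λ / φ (J n)) • J (n + 1) := by
    have := hpos n
    rw [hW, hWJ, hT hb.le, hJ, map_smul, smul_smul, smul_smul, smul_eq_mul]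
    congr 1
    field_simp
  have proportional (n : ℕ) : ∃ b : ℝ, 0 < b ∧ W n = b • J n := by
    induction n with
    | zero => exact ⟨1, one_pos, by rw [one_smul, h₀]⟩
    | succ n ih =>
      obtain ⟨b, hb, hWJ⟩ := ih
      exact ⟨_, div_pos hΛ (hpos n), succ_eq_smul n hb hWJ⟩
  obtain ⟨b, hb, hWJ⟩ := proportional n
  exact succ_eq_smul n hb hWJ

theorem tendsto_relativeIterate [TopologicalSpace E] [ContinuousSMul ℝ E]
    (hT : ∀ ⦃c : ℝ⦄, 0 ≤ c → ∀ f, T (c • f) = c • T f) (φ : E →L[ℝ] ℝ)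
    (hΛ : 0 < Λ) (hJ : ∀ n, J (n + 1) = Λ⁻¹ • T (J n))
    (hW : ∀ n, W (n + 1) = (φ (W n))⁻¹ • T (W n)) (h₀ : J 0 = W 0) (hpos : ∀ n, 0 < φ (J n))
    {c : ℝ} {v : E} (hc : c ≠ 0) (hv : φ v ≠ 0) (hlim : Tendsto J atTop (𝓝 (c • v))) :
    Tendsto W atTop (𝓝 ((Λ / φ v) • v)) := by
  have hφlim : Tendsto (fun n => φ (J n)) atTop (𝓝 (c * φ v)) := by
    rw [← smul_eq_mul, ← map_smul]
    exact φ.continuous.continuousAt.tendsto.comp hlim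
  have hquot : Tendsto (fun n => Λ / φ (J n)) atTop (𝓝 (Λ / (c * φ v))) :=
    tendsto_const_nhds.div hφlim (mul_ne_zero hc hv)
  have hprod := hquot.smul ((tendsto_add_atTop_iff_nat 1).2 hlim)
  have hlimit : (Λ / (c * φ v)) • c • v = (Λ / φ v) • v := by
    rw [smul_smul]
    congr 1
    field_simp
  rw [hlimit] at hprod
  exact (tendsto_add_atTop_iff_nat 1).1
    (hprod.congr fun n => (relativeIterate_succ hT φ.toLinearMap hΛ hJ hW h₀ hpos n).symm)

end RelativeIteration

section ContinuousFunctions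

variable {X : Type*} [TopologicalSpace X] [CompactSpace X]

lemma exists_pos_smul_le {f : C(X, ℝ)} (hf : ∀ x, 0 < f x) (g : C(X, ℝ)) :
    ∃ m : ℝ, 0 < m ∧ m • g ≤ f := by
  obtain ⟨δ, hδ, hδf⟩ := isCompact_univ.exists_forall_le' f.continuous.continuousOn
    fun x _ => hf x
  have hnorm : 0 < ‖g‖ + 1 := by positivity
  refine ⟨δ / (‖g‖ + 1), div_pos hδ hnorm, fun x => ?_⟩
  have hgx : g x ≤ ‖g‖ + 1 := (g.apply_le_norm x).trans (le_add_of_nonneg_right zero_le_one)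
  calc δ / (‖g‖ + 1) * g x ≤ δ / (‖g‖ + 1) * (‖g‖ + 1) := by gcongr
    _ = δ := div_mul_cancel₀ δ hnorm.ne'
    _ ≤ f x := hδf x (Set.mem_univ x)

lemma norm_le_norm_of_mem_Icc_neg {f g : C(X, ℝ)} (h : f ∈ Set.Icc (-g) g) : ‖f‖ ≤ ‖g‖ :=
  (ContinuousMap.norm_le f (norm_nonneg g)).2 fun x =>
    (abs_le.2 ⟨h.1 x, h.2 x⟩).trans (g.apply_le_norm x)

namespace IsDoeblinMap

variable {T : C(X, ℝ) → C(X, ℝ)} {ℓ : C(X, ℝ) →ₗ[ℝ] ℝ} {V : C(X, ℝ)}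

lemma map_pos (h : IsDoeblinMap T ℓ V) (hfix : T V = V) (hV : ∀ x, 0 < V x) {f : C(X, ℝ)}
    (hf : ∀ x, 0 < f x) (x : X) : 0 < T f x := by
  obtain ⟨m, hm, hmf⟩ := exists_pos_smul_le hf V
  have hcoeff : 0 < m + ℓ (f - m • V) :=
    add_pos_of_pos_of_nonneg hm (h.nonneg (sub_nonneg.2 hmf))
  exact (mul_pos hcoeff (hV x)).trans_le (h.add_smul_le_map hfix hm.le hmf x)

theorem exists_tendsto [Nonempty X] (h : IsDoeblinMap T ℓ V) (hfix : T V = V)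
    (hV : ∀ x, 0 < V x) (hℓ : 0 < ℓ V) {f : ℕ → C(X, ℝ)} (hf : ∀ n, f (n + 1) = T (f n))
    (hf₀ : ∀ x, 0 < f 0 x) : ∃ c : ℝ, 0 < c ∧ Tendsto f atTop (𝓝 (c • V)) := by
  obtain ⟨m, hm, hmf⟩ := exists_pos_smul_le hf₀ V
  obtain ⟨m', hm', hm'V⟩ := exists_pos_smul_le hV (f 0)
  have hfM : f 0 ≤ m'⁻¹ • V := (le_inv_smul_iff_of_pos hm').2 hm'V
  have hVpos : 0 < V :=
    ContinuousMap.lt_def.2 ⟨fun x => (hV x).le, Classical.arbitrary X, hV _⟩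
  obtain ⟨c, hmc, hc⟩ := h.exists_sub_smul_mem_Icc hfix hVpos hf hm.le hmf hfM
  have hpow : Tendsto (fun n => (1 - ℓ V) ^ n) atTop (𝓝 0) :=
    tendsto_pow_atTop_nhds_zero_of_lt_one
      (sub_nonneg.2 (h.apply_le_one hfix hVpos)) (sub_lt_self 1 hℓ)
  have hwidth : Tendsto (fun n => ((1 - ℓ V) ^ n * (m'⁻¹ - m)) • V) atTop (𝓝 0) := by
    simpa only [zero_mul, zero_smul] using (hpow.mul_const (m'⁻¹ - m)).smul_const V
  exact ⟨c, hm.trans_le hmc, tendsto_sub_nhds_zero_iff.1 <|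
    squeeze_zero_norm (fun n => norm_le_norm_of_mem_Icc_neg (hc n)) (by simpa using hwidth.norm)⟩

end IsDoeblinMap

end ContinuousFunctions

section ContinuousIntegrals

variable {X S E : Type*} [TopologicalSpace X] [TopologicalSpace S] [CompactSpace S]
  [MeasurableSpace S] [OpensMeasurableSpace S] [NormedAddCommGroup E] (γ : Measure S)
  [IsFiniteMeasure γ]

lemma integrable_of_compactSpace (f : C(S, E)) : Integrable f γ :=
  f.continuous.integrable_of_hasCompactSupport (.of_compactSpace f)

variable [NormedSpace ℝ E]

/-- Integration against a finite measure on a compact space, as a continuous linear map. -/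
noncomputable def integralCLM : C(S, E) →L[ℝ] E :=
  LinearMap.mkContinuous
    { toFun := fun f => ∫ y, f y ∂γ
      map_add' := fun f g =>
        integral_add (integrable_of_compactSpace γ f) (integrable_of_compactSpace γ g)
      map_smul' := fun c f => integral_smul c f }
    (γ.real Set.univ) fun f => by
      rw [mul_comm]
      exact norm_integral_le_of_norm_le_const (ae_of_all γ f.norm_coe_le_norm)

lemma continuous_integral_right (F : C(X × S, E)) : Continuous fun x => ∫ y, F (x, y) ∂γ :=
  (integralCLM γ).continuous.comp F.curry.continuous

end ContinuousIntegrals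

section DynamicProgramming

variable {S U : Type*} [TopologicalSpace S] [CompactSpace S] [MeasurableSpace S]
  [OpensMeasurableSpace S] [TopologicalSpace U] (γ : Measure S)
  [IsFiniteMeasure γ] (a : C(S × U × S, ℝ))

lemma continuous_integral_mul (f : C(S, ℝ)) :
    Continuous fun q : S × U => ∫ y, a (q.1, q.2, y) * f y ∂γ :=
  continuous_integral_right γ ⟨fun q : (S × U) × S => a (q.1.1, q.1.2, q.2) * f q.2, by fun_prop⟩

variable [CompactSpace U]

/-- The dynamic programming operator `f ↦ (x ↦ inf_u ∫ a(x, u, y) f(y) γ(dy))`, whose density `a`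
absorbs both the running cost and the transition density. -/
noncomputable def dpOperator (f : C(S, ℝ)) : C(S, ℝ) where
  toFun x := ⨅ u, ∫ y, a (x, u, y) * f y ∂γ
  continuous_toFun := by
    simpa only [Set.image_univ, sInf_range] using isCompact_univ.continuous_sInf
      (f := fun x u => ∫ y, a (x, u, y) * f y ∂γ) (continuous_integral_mul γ a f)

lemma dpOperator_smul {c : ℝ} (hc : 0 ≤ c) (f : C(S, ℝ)) :
    dpOperator γ a (c • f) = c • dpOperator γ a f := by
  ext x
  simp only [dpOperator, ContinuousMap.coe_mk, ContinuousMap.smul_apply, smul_eq_mul,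
    Real.mul_iInf_of_nonneg hc, ← integral_const_mul, mul_left_comm c]

lemma dpOperator_le (f : C(S, ℝ)) (x : S) (u : U) :
    dpOperator γ a f x ≤ ∫ y, a (x, u, y) * f y ∂γ :=
  have hcont : Continuous fun u => ∫ y, a (x, u, y) * f y ∂γ :=
    (continuous_integral_mul γ a f).comp (.prodMk_right x)
  ciInf_le (isCompact_range hcont).bddBelow u

variable {γ a}

lemma isDoeblinMap_dpOperator [Nonempty U] {ε : ℝ} (hε : 0 ≤ ε) {V : C(S, ℝ)}
    (hV : ∀ x u y, ε * V x ≤ a (x, u, y)) :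
    IsDoeblinMap (dpOperator γ a) (ε • (integralCLM γ).toLinearMap) V where
  map_smul _ hc f := dpOperator_smul γ a hc f
  nonneg _ hf := mul_nonneg hε (integral_nonneg hf)
  add_smul_le f g hfg x := le_ciInf fun u => by
    have hint (h : C(S, ℝ)) : Integrable (fun y => a (x, u, y) * h y) γ :=
      integrable_of_compactSpace γ ⟨fun y => a (x, u, y) * h y, by fun_prop⟩
    have hgap : ∫ y, ε * V x * (g - f) y ∂γ ≤ ∫ y, a (x, u, y) * (g - f) y ∂γ :=
      integral_mono ((integrable_of_compactSpace γ (g - f)).const_mul _) (hint (g - f)) fun y =>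
        mul_le_mul_of_nonneg_right (hV x u y) (sub_nonneg.2 (hfg y))
    calc dpOperator γ a f x + ε * (∫ y, (g - f) y ∂γ) * V x
        = dpOperator γ a f x + ∫ y, ε * V x * (g - f) y ∂γ := by
          rw [integral_const_mul, mul_right_comm]
      _ ≤ ∫ y, a (x, u, y) * f y ∂γ + ∫ y, a (x, u, y) * (g - f) y ∂γ :=
          add_le_add (dpOperator_le γ a f x u) hgap
      _ = ∫ y, a (x, u, y) * g y ∂γ := by
          rw [← integral_add (hint f) (hint (g - f))]
          simp only [← mul_add, ContinuousMap.sub_apply, add_sub_cancel]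

lemma integral_pos_of_dpOperator_ne_zero {f : C(S, ℝ)} (hf : ∀ y, 0 < f y) {x : S}
    (hx : dpOperator γ a f x ≠ 0) : 0 < ∫ y, f y ∂γ := by
  have hγ : γ ≠ 0 := by
    rintro rfl
    simp [dpOperator] at hx
  have hsupport : Function.support f = Set.univ := Set.eq_univ_of_forall fun y => (hf y).ne'
  rw [integral_pos_iff_support_of_nonneg (fun y => (hf y).le) (integrable_of_compactSpace γ f),
    hsupport]
  exact Measure.measure_univ_pos.2 hγ

theorem tendsto_dpOperator_iterates [Nonempty U] (ha : ∀ q, 0 < a q) {Λ : ℝ} (hΛ : 0 < Λ) (x₀ : S)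
    {V : C(S, ℝ)} (hV : ∀ x, 0 < V x) (hDP : dpOperator γ a V = Λ • V) {J W : ℕ → C(S, ℝ)}
    (hJ₀ : ∀ x, 0 < J 0 x) (hJW : J 0 = W 0) (hJ : ∀ n, J (n + 1) = Λ⁻¹ • dpOperator γ a (J n))
    (hW : ∀ n, W (n + 1) = (W n x₀)⁻¹ • dpOperator γ a (W n)) :
    ∃ c : ℝ, 0 < c ∧ Tendsto J atTop (𝓝 (c • V)) ∧ Tendsto W atTop (𝓝 ((Λ / V x₀) • V)) := by
  have : Nonempty S := ⟨x₀⟩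
  obtain ⟨ε, hε, hεV⟩ := exists_pos_smul_le ha (V.comp .fst)
  have hdoeblin := (isDoeblinMap_dpOperator (γ := γ) hε.le fun x u y => hεV (x, u, y)).const_smul
    (inv_nonneg.2 hΛ.le)
  have hfix : (Λ⁻¹ • dpOperator γ a) V = V := by
    rw [Pi.smul_apply, hDP, inv_smul_smul₀ hΛ.ne']
  have hmass : 0 < ∫ y, V y ∂γ := by
    refine integral_pos_of_dpOperator_ne_zero (a := a) hV (x := x₀) ?_
    rw [hDP]
    exact (mul_pos hΛ (hV x₀)).ne'
  obtain ⟨c, hc, hlim⟩ := hdoeblin.exists_tendsto hfix hV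
    (mul_pos (inv_pos.2 hΛ) (mul_pos hε hmass)) hJ hJ₀
  have hJpos (n : ℕ) : ∀ x, 0 < J n x := by
    induction n with
    | zero => exact hJ₀
    | succ n ih =>
      rw [hJ]
      exact hdoeblin.map_pos hfix hV ih
  exact ⟨c, hc, hlim, tendsto_relativeIterate (fun _ hc f => dpOperator_smul γ a hc f)
    (ContinuousMap.evalCLM ℝ x₀) hΛ hJ hW hJW (fun n => hJpos n x₀) hc.ne' (hV x₀).ne' hlim⟩

variable (γ a) in
lemma continuous_of_eq_mul_iInf_integral {b : ℕ → ℝ} {f : ℕ → S → ℝ} (hf₀ : Continuous (f 0))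
    (hf : ∀ n x, f (n + 1) x = b n * ⨅ u, ∫ y, a (x, u, y) * f n y ∂γ) (n : ℕ) :
    Continuous (f n) := by
  induction n with
  | zero => exact hf₀
  | succ n ih =>
    rw [funext (hf n)]
    exact (dpOperator γ a ⟨f n, ih⟩).continuous.const_mul (b n)

end DynamicProgramming

lemma mul_integral_withDensity_ofReal {S : Type*} [MeasurableSpace S] (γ : Measure S) {φ : S → ℝ}
    (hφ : Measurable φ) (hφ₀ : ∀ y, 0 ≤ φ y) (r : ℝ) (f : S → ℝ) :
    r * ∫ y, f y ∂γ.withDensity (fun y => ENNReal.ofReal (φ y)) = ∫ y, r * φ y * f y ∂γ := by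
  rw [integral_withDensity_eq_integral_toReal_smul hφ.ennreal_ofReal
    (ae_of_all γ fun _ => ENNReal.ofReal_lt_top), ← integral_const_mul]
  simp only [ENNReal.toReal_ofReal (hφ₀ _), smul_eq_mul, mul_assoc]

theorem vi_rvi_convergence_general
    {S U : Type*} [TopologicalSpace S] [CompactSpace S] [MeasurableSpace S] [OpensMeasurableSpace S]
    [TopologicalSpace U] [CompactSpace U] [Nonempty U]
    (γ : Measure S) [IsFiniteMeasure γ]
    (φ : S → U → S → ℝ)
    (hφc : Continuous fun q : S × U × S => φ q.1 q.2.1 q.2.2)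
    (hφpos : ∀ x u y, 0 < φ x u y)
    (p : S → U → Measure S)
    (hp : ∀ x u, p x u = γ.withDensity fun y => ENNReal.ofReal (φ x u y))
    (k : S → U → ℝ) (hk : Continuous fun q : S × U => k q.1 q.2)
    (Λ : ℝ) (hΛ : 0 < Λ) (x₀ : S)
    (V : S → ℝ) (hVc : Continuous V) (hVpos : ∀ x, 0 < V x)
    (hDP : ∀ x : S, Λ * V x = ⨅ u : U, Real.exp (k x u) * ∫ y, V y ∂(p x u))
    (J Vit : ℕ → S → ℝ)
    (hJ0c : Continuous (J 0)) (hJ0pos : ∀ x, 0 < J 0 x) (hJV0 : J 0 = Vit 0)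
    (hJ : ∀ n x, J (n + 1) x = Λ⁻¹ * ⨅ u : U, Real.exp (k x u) * ∫ y, J n y ∂(p x u))
    (hVit : ∀ n x, Vit (n + 1) x
        = (Vit n x₀)⁻¹ * ⨅ u : U, Real.exp (k x u) * ∫ y, Vit n y ∂(p x u)) :
    ∃ c : ℝ, 0 < c ∧ TendstoUniformly J (fun x => c * V x) atTop ∧
      TendstoUniformly Vit (fun x => Λ / V x₀ * V x) atTop := by
  let a : C(S × U × S, ℝ) := ⟨fun q => Real.exp (k q.1 q.2.1) * φ q.1 q.2.1 q.2.2,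
    (Real.continuous_exp.comp (hk.comp (by fun_prop : Continuous fun q : S × U × S =>
      (q.1, q.2.1)))).mul hφc⟩
  have ha (q : S × U × S) : 0 < a q := mul_pos (Real.exp_pos _) (hφpos _ _ _)
  have hdensity (f : S → ℝ) (x : S) (u : U) :
      Real.exp (k x u) * ∫ y, f y ∂(p x u) = ∫ y, a (x, u, y) * f y ∂γ := by
    have hφmeas : Measurable (φ x u) :=
      (hφc.comp (by fun_prop : Continuous fun y : S => (x, u, y))).measurable
    rw [hp]
    exact mul_integral_withDensity_ofReal γ hφmeas (fun y => (hφpos x u y).le) _ f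
  simp only [hdensity] at hDP hJ hVit
  have hJc := continuous_of_eq_mul_iInf_integral γ a hJ0c hJ
  have hVitc := continuous_of_eq_mul_iInf_integral γ a (hJV0 ▸ hJ0c) hVit
  lift V to C(S, ℝ) using hVc
  lift J to ℕ → C(S, ℝ) using hJc
  lift Vit to ℕ → C(S, ℝ) using hVitc
  obtain ⟨c, hc, hJlim, hVitlim⟩ := tendsto_dpOperator_iterates ha hΛ x₀ hVpos
    (ContinuousMap.ext fun x => (hDP x).symm) hJ0pos (DFunLike.coe_injective hJV0)
    (fun n => ContinuousMap.ext (hJ n)) (fun n => ContinuousMap.ext (hVit n))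
  exact ⟨c, hc, ContinuousMap.tendsto_iff_tendstoUniformly.1 hJlim,
    ContinuousMap.tendsto_iff_tendstoUniformly.1 hVitlim⟩

/-- **Convergence of the value iteration and relative value iteration (main
discrete-time theorem):** if `(Λ, V)` solves the DP equation, then there is a
constant `c > 0` such that `J n x → c·V x` for `γ`-a.e. `x`, and
`V n x → (Λ / V x₀)·V x` for `γ`-a.e. `x`. -/
theorem vi_rvi_convergence
    {S U : Type*} [MetricSpace S] [CompactSpace S] [MeasurableSpace S] [BorelSpace S]
    [MetricSpace U] [CompactSpace U] [Nonempty U]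
    (γ : Measure S) [IsFiniteMeasure γ]
    (hγ : ∀ O : Set S, IsOpen O → O.Nonempty → 0 < γ O)
    (φ : S → U → S → ℝ)
    (hφc : Continuous fun q : S × U × S => φ q.1 q.2.1 q.2.2)
    (hφpos : ∀ x u y, 0 < φ x u y)
    (p : S → U → Measure S)
    (hp : ∀ x u, p x u = γ.withDensity fun y => ENNReal.ofReal (φ x u y))
    (hprob : ∀ x u, IsProbabilityMeasure (p x u))
    (k : S → U → ℝ) (hk : Continuous fun q : S × U => k q.1 q.2)
    (Λ : ℝ) (hΛ : 0 < Λ) (x₀ : S)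
    (V : S → ℝ) (hVc : Continuous V) (hVpos : ∀ x, 0 < V x)
    (hDP : ∀ x : S, Λ * V x = ⨅ u : U, Real.exp (k x u) * ∫ y, V y ∂(p x u))
    (J Vit : ℕ → S → ℝ)
    (hJ0c : Continuous (J 0)) (hJ0pos : ∀ x, 0 < J 0 x) (hJV0 : J 0 = Vit 0)
    (hJ : ∀ n x, J (n + 1) x = Λ⁻¹ * ⨅ u : U, Real.exp (k x u) * ∫ y, J n y ∂(p x u))
    (hVit : ∀ n x, Vit (n + 1) x
        = (Vit n x₀)⁻¹ * ⨅ u : U, Real.exp (k x u) * ∫ y, Vit n y ∂(p x u)) :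
    ∃ c : ℝ, 0 < c ∧
      (∀ᵐ x ∂γ, Filter.Tendsto (fun n => J n x) Filter.atTop (nhds (c * V x))) ∧
      ∀ᵐ x ∂γ, Filter.Tendsto (fun n => Vit n x) Filter.atTop
        (nhds ((Λ / V x₀) * V x)) := by
  obtain ⟨c, hc, hJlim, hVitlim⟩ := vi_rvi_convergence_general γ φ hφc hφpos p hp k hk Λ hΛ x₀
    V hVc hVpos hDP J Vit hJ0c hJ0pos hJV0 hJ hVit
  exact ⟨c, hc, ae_of_all γ hJlim.tendsto_at, ae_of_all γ hVitlim.tendsto_at⟩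
end

section
/- Lyapunov drift inequality for the twisted operator: let a : ℝ^d → ℝ^{d×d} take values in symmetric matrices, let Act be a set, b : ℝ^d × Act → ℝ^d, c : ℝ^d × Act → ℝ, and for u ∈ Act let 𝓛_u be the elliptic operator with diffusion matrix a and drift b(·,u). Let Ψ : ℝ^d → (0,∞) and 𝒱 : ℝ^d → [1,∞) be twice differentiable, K ⊆ ℝ^d, and Ĉ ≥ 0, γ, λ* real constants. Assume that for all x ∈ ℝ^d and u ∈ Act: 𝓛_u Ψ(x) + c(x,u)Ψ(x) ≥ λ* Ψ(x), and 𝓛_u 𝒱(x) ≤ Ĉ·1_K(x) − γ·𝒱(x). Then, with ψ = log Ψ and 𝓛̃_u f = 𝓛_u f + ⟨a∇ψ, ∇f⟩, for all x ∈ ℝ^d and u ∈ Act: 𝓛̃_u(𝒱/Ψ)(x) ≤ ( Ĉ·1_K(x)/𝒱(x) − λ* + c(x,u) − γ ) · (𝒱(x)/Ψ(x)). -/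
open Filter Topology

/-- The elliptic operator `𝓛 f(x) = (1/2)·trace(a(x)·∇²f(x)) + ⟨b(x), ∇f(x)⟩`
with diffusion matrix `a` and drift `b`, acting on `f : ℝ^d → ℝ`. -/
noncomputable def ellOp {d : ℕ} (a : (Fin d → ℝ) → Matrix (Fin d) (Fin d) ℝ)
    (b : (Fin d → ℝ) → Fin d → ℝ) (f : (Fin d → ℝ) → ℝ) (x : Fin d → ℝ) : ℝ :=
  (1 / 2) * ∑ i, ∑ j, a x i j *
      fderiv ℝ (fun y => fderiv ℝ f y (Pi.single j (1 : ℝ))) x (Pi.single i 1)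
    + fderiv ℝ f x (b x)

/-- The gradient of `f : ℝ^d → ℝ` as a vector. -/
noncomputable def gradVec {d : ℕ} (f : (Fin d → ℝ) → ℝ) (x : Fin d → ℝ) :
    Fin d → ℝ :=
  fun i => fderiv ℝ f x (Pi.single i (1 : ℝ))

/-- The twisted operator `𝓛̃ f = 𝓛 f + ⟨a ∇ψ, ∇f⟩`. -/
noncomputable def twistedOp {d : ℕ} (a : (Fin d → ℝ) → Matrix (Fin d) (Fin d) ℝ)
    (b : (Fin d → ℝ) → Fin d → ℝ) (ψ : (Fin d → ℝ) → ℝ)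
    (f : (Fin d → ℝ) → ℝ) (x : Fin d → ℝ) : ℝ :=
  ellOp a b f x + fderiv ℝ f x ((a x).mulVec (gradVec ψ x))

/-- `f : ℝ^d → ℝ` is twice differentiable. -/
def TwiceDiff {d : ℕ} (f : (Fin d → ℝ) → ℝ) : Prop :=
  Differentiable ℝ f ∧ Differentiable ℝ (fderiv ℝ f)

/-!
Since `∇ log Ψ = Ψ⁻¹ ∇Ψ`, the extra drift of the twisted operator is exactly the cross term in the
product rule for `𝓛(g Ψ)`. Hence `𝓛̃ g = Ψ⁻¹ (𝓛(g Ψ) - g 𝓛Ψ)`, the Doob transform of `𝓛` by `Ψ`, and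
for `g = 𝒱 / Ψ` both terms on the right are bounded by the hypotheses.
-/

section TwiceDifferentiability

variable {𝕜 E F : Type*} [NontriviallyNormedField 𝕜] [NormedAddCommGroup E] [NormedSpace 𝕜 E]
  [NormedAddCommGroup F] [NormedSpace 𝕜 F]

variable (𝕜) in
/-- Twice differentiability of `f` at a point, the local form of `TwiceDiff`. Differentiability is
required in a neighbourhood of the point, so that the values of `fderiv 𝕜 f` there are genuine
derivatives. -/
def TwiceDiffAt (f : E → F) (x : E) : Prop :=
  (∀ᶠ y in 𝓝 x, DifferentiableAt 𝕜 f y) ∧ DifferentiableAt 𝕜 (fderiv 𝕜 f) x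

theorem TwiceDiff.twiceDiffAt {d : ℕ} {f : (Fin d → ℝ) → ℝ} (hf : TwiceDiff f) (x : Fin d → ℝ) :
    TwiceDiffAt ℝ f x :=
  ⟨.of_forall hf.1, hf.2 x⟩

theorem TwiceDiffAt.differentiableAt {f : E → F} {x : E} (hf : TwiceDiffAt 𝕜 f x) :
    DifferentiableAt 𝕜 f x :=
  hf.1.self_of_nhds

variable {f g : E → 𝕜} {x : E}

theorem fderiv_mul_eventuallyEq (hf : ∀ᶠ y in 𝓝 x, DifferentiableAt 𝕜 f y)
    (hg : ∀ᶠ y in 𝓝 x, DifferentiableAt 𝕜 g y) :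
    fderiv 𝕜 (fun y => f y * g y) =ᶠ[𝓝 x] fun y => f y • fderiv 𝕜 g y + g y • fderiv 𝕜 f y := by
  filter_upwards [hf, hg] with y hfy hgy using fderiv_fun_mul hfy hgy

theorem TwiceDiffAt.mul (hf : TwiceDiffAt 𝕜 f x) (hg : TwiceDiffAt 𝕜 g x) :
    TwiceDiffAt 𝕜 (fun y => f y * g y) x := by
  refine ⟨?_, (fderiv_mul_eventuallyEq hf.1 hg.1).differentiableAt_iff.2 ?_⟩
  · filter_upwards [hf.1, hg.1] with y hfy hgy using hfy.fun_mul hgy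
  · exact (hf.differentiableAt.fun_smul hg.2).fun_add (hg.differentiableAt.fun_smul hf.2)

theorem TwiceDiffAt.inv (hf : TwiceDiffAt 𝕜 f x) (hx : f x ≠ 0) :
    TwiceDiffAt 𝕜 (fun y => (f y)⁻¹) x := by
  have hne : ∀ᶠ y in 𝓝 x, f y ≠ 0 := hf.differentiableAt.continuousAt.eventually_ne hx
  have hfderiv : fderiv 𝕜 (fun y => (f y)⁻¹) =ᶠ[𝓝 x] fun y => -(f y ^ 2)⁻¹ • fderiv 𝕜 f y := by
    filter_upwards [hf.1, hne] with y hfy hy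
    exact ((hasDerivAt_inv hy).comp_hasFDerivAt y hfy.hasFDerivAt).fderiv
  refine ⟨?_, hfderiv.differentiableAt_iff.2 ?_⟩
  · filter_upwards [hf.1, hne] with y hfy hy using hfy.fun_inv hy
  · exact ((hf.differentiableAt.fun_pow 2).fun_inv (pow_ne_zero 2 hx)).fun_neg.fun_smul hf.2

theorem TwiceDiffAt.div (hf : TwiceDiffAt 𝕜 f x) (hg : TwiceDiffAt 𝕜 g x) (hx : g x ≠ 0) :
    TwiceDiffAt 𝕜 (fun y => f y / g y) x := by
  simpa only [div_eq_mul_inv] using hf.mul (hg.inv hx)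

theorem TwiceDiffAt.fderiv_fderiv_mul_apply (hf : TwiceDiffAt 𝕜 f x) (hg : TwiceDiffAt 𝕜 g x)
    (v w : E) :
    fderiv 𝕜 (fun y => fderiv 𝕜 (fun z => f z * g z) y v) x w =
      f x * fderiv 𝕜 (fun y => fderiv 𝕜 g y v) x w +
        g x * fderiv 𝕜 (fun y => fderiv 𝕜 f y v) x w +
          (fderiv 𝕜 f x w * fderiv 𝕜 g x v + fderiv 𝕜 g x w * fderiv 𝕜 f x v) := by
  have hfv : DifferentiableAt 𝕜 (fun y => fderiv 𝕜 f y v) x :=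
    hf.2.clm_apply (differentiableAt_const v)
  have hgv : DifferentiableAt 𝕜 (fun y => fderiv 𝕜 g y v) x :=
    hg.2.clm_apply (differentiableAt_const v)
  have hfirst : (fun y => fderiv 𝕜 (fun z => f z * g z) y v) =ᶠ[𝓝 x]
      fun y => f y * fderiv 𝕜 g y v + g y * fderiv 𝕜 f y v :=
    (fderiv_mul_eventuallyEq hf.1 hg.1).fun_comp (· v)
  rw [hfirst.fderiv_eq,
    fderiv_fun_add (hf.differentiableAt.fun_mul hgv) (hg.differentiableAt.fun_mul hfv),
    fderiv_fun_mul hf.differentiableAt hgv, fderiv_fun_mul hg.differentiableAt hfv]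
  simp only [add_apply, smul_apply, smul_eq_mul]
  ring

end TwiceDifferentiability

theorem sum_sum_mul_eq_dotProduct_mulVec {m n R : Type*} [Fintype m] [Fintype n]
    [NonUnitalCommSemiring R] (A : Matrix m n R) (p : m → R) (q : n → R) :
    ∑ i, ∑ j, A i j * (p i * q j) = p ⬝ᵥ A.mulVec q := by
  simp only [dotProduct, Matrix.mulVec, Finset.mul_sum]
  exact Finset.sum_congr rfl fun i _ => Finset.sum_congr rfl fun j _ => mul_left_comm _ _ _

section EllipticOperator

variable {d : ℕ} {f g : (Fin d → ℝ) → ℝ} {x : Fin d → ℝ}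

theorem fderiv_apply_eq_gradVec_dotProduct (f : (Fin d → ℝ) → ℝ) (x v : Fin d → ℝ) :
    fderiv ℝ f x v = gradVec f x ⬝ᵥ v := by
  calc fderiv ℝ f x v
    _ = fderiv ℝ f x (∑ i, v i • Pi.single i 1) := by rw [← pi_eq_sum_univ' v]
    _ = gradVec f x ⬝ᵥ v := by
      simp only [map_sum, map_smul, smul_eq_mul, dotProduct, gradVec, mul_comm]

theorem gradVec_log (hf : DifferentiableAt ℝ f x) (hx : f x ≠ 0) :
    gradVec (fun y => Real.log (f y)) x = (f x)⁻¹ • gradVec f x := by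
  funext i
  simp only [gradVec, fderiv.log hf hx, smul_apply, Pi.smul_apply]

/-- The second-order part `trace(A·∇²f(x))` of an elliptic operator, for the matrix `A` of its
coefficients at `x`. -/
noncomputable def hessTrace (A : Matrix (Fin d) (Fin d) ℝ) (f : (Fin d → ℝ) → ℝ)
    (x : Fin d → ℝ) : ℝ :=
  ∑ i, ∑ j, A i j * fderiv ℝ (fun y => fderiv ℝ f y (Pi.single j 1)) x (Pi.single i 1)

theorem ellOp_eq_hessTrace_add (a : (Fin d → ℝ) → Matrix (Fin d) (Fin d) ℝ)
    (b : (Fin d → ℝ) → Fin d → ℝ) (f : (Fin d → ℝ) → ℝ) (x : Fin d → ℝ) :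
    ellOp a b f x = 1 / 2 * hessTrace (a x) f x + fderiv ℝ f x (b x) :=
  rfl

theorem hessTrace_congr (A : Matrix (Fin d) (Fin d) ℝ) (hfg : f =ᶠ[𝓝 x] g) :
    hessTrace A f x = hessTrace A g x := by
  have hpartial (v : Fin d → ℝ) : (fun y => fderiv ℝ f y v) =ᶠ[𝓝 x] fun y => fderiv ℝ g y v :=
    hfg.fderiv.fun_comp (· v)
  simp only [hessTrace, (hpartial _).fderiv_eq]

theorem ellOp_congr (a : (Fin d → ℝ) → Matrix (Fin d) (Fin d) ℝ) (b : (Fin d → ℝ) → Fin d → ℝ)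
    (hfg : f =ᶠ[𝓝 x] g) : ellOp a b f x = ellOp a b g x := by
  rw [ellOp_eq_hessTrace_add, ellOp_eq_hessTrace_add, hessTrace_congr _ hfg, hfg.fderiv_eq]

theorem hessTrace_mul {A : Matrix (Fin d) (Fin d) ℝ} (hA : A.IsSymm) (hf : TwiceDiffAt ℝ f x)
    (hg : TwiceDiffAt ℝ g x) :
    hessTrace A (fun y => f y * g y) x =
      f x * hessTrace A g x + g x * hessTrace A f x +
        2 * (gradVec f x ⬝ᵥ A.mulVec (gradVec g x)) := by
  have hproduct : hessTrace A (fun y => f y * g y) x =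
      f x * hessTrace A g x + g x * hessTrace A f x +
        (gradVec f x ⬝ᵥ A.mulVec (gradVec g x) + gradVec g x ⬝ᵥ A.mulVec (gradVec f x)) := by
    simp only [hessTrace, ← sum_sum_mul_eq_dotProduct_mulVec, Finset.mul_sum,
      ← Finset.sum_add_distrib]
    refine Finset.sum_congr rfl fun i _ => Finset.sum_congr rfl fun j _ => ?_
    simp only [hf.fderiv_fderiv_mul_apply hg, gradVec]
    ring
  have hcross : gradVec g x ⬝ᵥ A.mulVec (gradVec f x) = gradVec f x ⬝ᵥ A.mulVec (gradVec g x) := by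
    rw [← A.dotProduct_transpose_mulVec, hA.eq]
  rw [hproduct, hcross, two_mul]

variable {a : (Fin d → ℝ) → Matrix (Fin d) (Fin d) ℝ}

theorem ellOp_mul (b : (Fin d → ℝ) → Fin d → ℝ) (ha : (a x).IsSymm) (hf : TwiceDiffAt ℝ f x)
    (hg : TwiceDiffAt ℝ g x) :
    ellOp a b (fun y => f y * g y) x =
      f x * ellOp a b g x + g x * ellOp a b f x + fderiv ℝ f x ((a x).mulVec (gradVec g x)) := by
  have hdrift : fderiv ℝ (fun y => f y * g y) x (b x) =
      f x * fderiv ℝ g x (b x) + g x * fderiv ℝ f x (b x) := by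
    rw [fderiv_fun_mul hf.differentiableAt hg.differentiableAt]
    rfl
  simp only [ellOp_eq_hessTrace_add, hessTrace_mul ha hf hg, hdrift,
    fderiv_apply_eq_gradVec_dotProduct f x ((a x).mulVec _)]
  ring

theorem twistedOp_log (b : (Fin d → ℝ) → Fin d → ℝ) (ha : (a x).IsSymm)
    (hf : TwiceDiffAt ℝ f x) (hg : TwiceDiffAt ℝ g x) (hx : g x ≠ 0) :
    twistedOp a b (fun y => Real.log (g y)) f x =
      (ellOp a b (fun y => f y * g y) x - f x * ellOp a b g x) / g x := by
  rw [twistedOp, gradVec_log hg.differentiableAt hx, Matrix.mulVec_smul, map_smul, smul_eq_mul,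
    ellOp_mul b ha hf hg]
  field_simp
  ring

theorem twistedOp_log_div (b : (Fin d → ℝ) → Fin d → ℝ) (ha : (a x).IsSymm)
    (hf : TwiceDiffAt ℝ f x) (hg : TwiceDiffAt ℝ g x) (hx : g x ≠ 0) :
    twistedOp a b (fun y => Real.log (g y)) (fun y => f y / g y) x =
      (ellOp a b f x - f x / g x * ellOp a b g x) / g x := by
  have hcancel : (fun y => f y / g y * g y) =ᶠ[𝓝 x] f := by
    filter_upwards [hg.differentiableAt.continuousAt.eventually_ne hx] with y hy
      using div_mul_cancel₀ _ hy
  rw [twistedOp_log b ha (hf.div hg hx) hg hx, ellOp_congr a b hcancel]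

end EllipticOperator

theorem twisted_lyapunov_drift_general {d : ℕ} {a : (Fin d → ℝ) → Matrix (Fin d) (Fin d) ℝ}
    {b : (Fin d → ℝ) → Fin d → ℝ} {Ψ V : (Fin d → ℝ) → ℝ} {x : Fin d → ℝ} {c k γ lamstar : ℝ}
    (hsymm : (a x).IsSymm) (hΨ : TwiceDiffAt ℝ Ψ x) (hV : TwiceDiffAt ℝ V x)
    (hΨpos : 0 < Ψ x) (hVpos : 0 < V x)
    (heigen : lamstar * Ψ x ≤ ellOp a b Ψ x + c * Ψ x) (hdrift : ellOp a b V x ≤ k - γ * V x) :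
    twistedOp a b (fun y => Real.log (Ψ y)) (fun y => V y / Ψ y) x ≤
      (k / V x - lamstar + c - γ) * (V x / Ψ x) := by
  have hΨlower : (lamstar - c) * Ψ x ≤ ellOp a b Ψ x := by linarith
  calc twistedOp a b (fun y => Real.log (Ψ y)) (fun y => V y / Ψ y) x
    _ = (ellOp a b V x - V x / Ψ x * ellOp a b Ψ x) / Ψ x :=
      twistedOp_log_div b hsymm hV hΨ hΨpos.ne'
    _ ≤ (k - γ * V x - V x / Ψ x * ((lamstar - c) * Ψ x)) / Ψ x := by gcongr
    _ = (k / V x - lamstar + c - γ) * (V x / Ψ x) := by field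

/-- **Lyapunov drift inequality for the twisted operator:** if
`𝓛_u Ψ + c(·,u)Ψ ≥ λ* Ψ` and `𝓛_u 𝒱 ≤ Ĉ·1_K − γ·𝒱` for all controls `u`,
then with `ψ = log Ψ`,
`𝓛̃_u(𝒱/Ψ)(x) ≤ (Ĉ·1_K(x)/𝒱(x) − λ* + c(x,u) − γ)·(𝒱(x)/Ψ(x))`. -/
theorem twisted_lyapunov_drift {d : ℕ} {Act : Type*}
    (a : (Fin d → ℝ) → Matrix (Fin d) (Fin d) ℝ)
    (hsymm : ∀ x, (a x).IsSymm)
    (b : (Fin d → ℝ) → Act → Fin d → ℝ)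
    (c : (Fin d → ℝ) → Act → ℝ)
    (Ψ V : (Fin d → ℝ) → ℝ)
    (hΨ : TwiceDiff Ψ) (hV : TwiceDiff V)
    (hΨpos : ∀ x, 0 < Ψ x) (hVone : ∀ x, 1 ≤ V x)
    (K : Set (Fin d → ℝ)) (Chat γ lamstar : ℝ) (hChat : 0 ≤ Chat)
    (heigen : ∀ (x : Fin d → ℝ) (u : Act),
      lamstar * Ψ x ≤ ellOp a (fun y => b y u) Ψ x + c x u * Ψ x)
    (hdrift : ∀ (x : Fin d → ℝ) (u : Act),
      ellOp a (fun y => b y u) V x ≤ K.indicator (fun _ => Chat) x - γ * V x) :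
    ∀ (x : Fin d → ℝ) (u : Act),
      twistedOp a (fun y => b y u) (fun y => Real.log (Ψ y))
          (fun y => V y / Ψ y) x
        ≤ (K.indicator (fun _ => Chat) x / V x - lamstar + c x u - γ)
            * (V x / Ψ x) := by
  intro x u
  exact twisted_lyapunov_drift_general (hsymm x) (hΨ.twiceDiffAt x) (hV.twiceDiffAt x) (hΨpos x)
    (zero_lt_one.trans_le (hVone x)) (heigen x u) (hdrift x u)
end

section
/- The relative value iteration PDE transforms into the value iteration PDE: let Act be a compact topological space, a : ℝ^d → ℝ^{d×d} continuous with symmetric values, b : ℝ^d × Act → ℝ^d and c : ℝ^d × Act → ℝ continuous, and λ* ∈ ℝ. Let Φ : [0,∞) × ℝ^d → (0,∞) be continuous, continuously differentiable in t and twice continuously differentiable in x on (0,∞) × ℝ^d, and satisfy the RVI equation ∂_t Φ(t,x) = inf_{u∈Act} [ 𝓛_u Φ(t,·)(x) + c(x,u)Φ(t,x) ] − Φ(t,0)·Φ(t,x) for all t > 0, x ∈ ℝ^d. Define Φ̄(t,x) := Φ(t,x) · exp( ∫_0^t (Φ(s,0) − λ*) ds ). Then Φ̄(0,·) = Φ(0,·)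 and Φ̄ satisfies the VI equation ∂_t Φ̄(t,x) = inf_{u∈Act} [ 𝓛_u Φ̄(t,·)(x) + c(x,u)Φ̄(t,x) ] − λ*·Φ̄(t,x) for all t > 0, x ∈ ℝ^d. -/
open Filter Topology intervalIntegral

/-!
Multiplying a solution by a factor depending on time only commutes with any positively homogeneous
operator in space, such as the Bellman operator. Such a factor therefore only adds its logarithmic
derivative to the zeroth order coefficient, and `exp (∫₀ᵗ (Φ(s, 0) - λ*) ds)` is chosen to turn
`-Φ(t, 0)` into `-λ*`.
-/

/-- The Bellman operator `f ↦ inf_u [𝓛_u f + c(·, u) f]`: the nonlinear part shared by the RVI and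
VI equations. The real-valued infimum is `0` when the family is empty or unbounded below. -/
noncomputable def bellmanOp {d : ℕ} {Act : Type*} (a : (Fin d → ℝ) → Matrix (Fin d) (Fin d) ℝ)
    (b : (Fin d → ℝ) → Act → Fin d → ℝ) (c : (Fin d → ℝ) → Act → ℝ)
    (f : (Fin d → ℝ) → ℝ) (x : Fin d → ℝ) : ℝ :=
  ⨅ u, ellOp a (fun y => b y u) f x + c x u * f x

theorem ellOp_const_smul {d : ℕ} (a : (Fin d → ℝ) → Matrix (Fin d) (Fin d) ℝ)
    (b : (Fin d → ℝ) → Fin d → ℝ) (k : ℝ) (f : (Fin d → ℝ) → ℝ) :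
    ellOp a b (k • f) = k • ellOp a b f := by
  have directional (v : Fin d → ℝ) :
      (fun y => fderiv ℝ (k • f) y v) = k • fun y => fderiv ℝ f y v := by
    rw [fderiv_const_smul_field]
    rfl
  ext x
  simp only [ellOp, directional, Pi.smul_apply]
  simp only [fderiv_const_smul_field, Pi.smul_apply, smul_apply, smul_eq_mul, mul_add,
    Finset.mul_sum, mul_left_comm k]

theorem bellmanOp_const_smul {d : ℕ} {Act : Type*}
    (a : (Fin d → ℝ) → Matrix (Fin d) (Fin d) ℝ) (b : (Fin d → ℝ) → Act → Fin d → ℝ)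
    (c : (Fin d → ℝ) → Act → ℝ) {k : ℝ} (hk : 0 ≤ k) (f : (Fin d → ℝ) → ℝ) :
    bellmanOp a b c (k • f) = k • bellmanOp a b c f := by
  ext x
  simp only [bellmanOp, ellOp_const_smul, Pi.smul_apply, smul_eq_mul,
    Real.mul_iInf_of_nonneg hk, mul_add, mul_left_comm k]

theorem hasDerivAt_integral_of_continuousOn_Ici {E : Type*} [NormedAddCommGroup E]
    [NormedSpace ℝ E] [CompleteSpace E] {f : ℝ → E} {a t : ℝ}
    (hf : ContinuousOn f (Set.Ici a)) (hat : a < t) :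
    HasDerivAt (fun r => ∫ s in a..r, f s) (f t) t := by
  have hIcc : ContinuousOn f (Set.uIcc a t) :=
    hf.mono (Set.uIcc_of_le hat.le ▸ Set.Icc_subset_Ici_self)
  have hIoi : ContinuousOn f (Set.Ioi a) := hf.mono Set.Ioi_subset_Ici_self
  exact integral_hasDerivAt_right hIcc.intervalIntegrable
    (hIoi.stronglyMeasurableAtFilter isOpen_Ioi t hat) (hf.continuousAt (Ici_mem_nhds hat))

theorem hasDerivAt_mul_exp_of_sub_mul {φ G : ℝ → ℝ} {h p q t : ℝ}
    (hφ : HasDerivAt φ (h - p * φ t) t) (hG : HasDerivAt G (p - q) t) :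
    HasDerivAt (fun s => φ s * Real.exp (G s))
      (Real.exp (G t) * h - q * (φ t * Real.exp (G t))) t :=
  (hφ.mul hG.exp).congr_deriv (by ring)

theorem rvi_pde_transforms_to_vi_pde_general {X : Type*} {H : (X → ℝ) → X → ℝ}
    (hH : ∀ k : ℝ, 0 < k → ∀ f, H (k • f) = k • H f)
    {g : ℝ → ℝ} (hg : ContinuousOn g (Set.Ici 0)) (lamstar : ℝ) {Φ Φbar : ℝ → X → ℝ}
    (hRVI : ∀ t ∈ Set.Ioi (0 : ℝ), ∀ x,
      HasDerivAt (fun s => Φ s x) (H (Φ t) x - g t * Φ t x) t)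
    (hΦbar : ∀ t x, Φbar t x = Φ t x * Real.exp (∫ s in (0 : ℝ)..t, (g s - lamstar))) :
    (∀ x, Φbar 0 x = Φ 0 x) ∧
    ∀ t ∈ Set.Ioi (0 : ℝ), ∀ x,
      HasDerivAt (fun s => Φbar s x) (H (Φbar t) x - lamstar * Φbar t x) t := by
  refine ⟨fun x => by simp [hΦbar], fun t ht x => ?_⟩
  have hG : HasDerivAt (fun r => ∫ s in (0 : ℝ)..r, (g s - lamstar)) (g t - lamstar) t :=
    hasDerivAt_integral_of_continuousOn_Ici (hg.sub continuousOn_const) ht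
  have hΦbar_smul : Φbar t = Real.exp (∫ s in (0 : ℝ)..t, (g s - lamstar)) • Φ t := by
    ext y
    rw [hΦbar, mul_comm, Pi.smul_apply, smul_eq_mul]
  have hH_Φbar : H (Φbar t) x = Real.exp (∫ s in (0 : ℝ)..t, (g s - lamstar)) * H (Φ t) x := by
    rw [hΦbar_smul, hH _ (Real.exp_pos _), Pi.smul_apply, smul_eq_mul]
  rw [hH_Φbar]
  simp only [hΦbar]
  exact hasDerivAt_mul_exp_of_sub_mul (hRVI t ht x) hG

/-- **The relative value iteration PDE transforms into the value iteration PDE:**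
if `Φ` solves the RVI equation
`∂ₜΦ = inf_u [𝓛_u Φ + c(·,u)Φ] − Φ(t,0)Φ` on `(0,∞) × ℝ^d`, then
`Φ̄(t,x) := Φ(t,x)·exp(∫₀ᵗ (Φ(s,0) − λ*) ds)` satisfies `Φ̄(0,·) = Φ(0,·)` and
solves the VI equation `∂ₜΦ̄ = inf_u [𝓛_u Φ̄ + c(·,u)Φ̄] − λ*·Φ̄`. -/
theorem rvi_pde_transforms_to_vi_pde {d : ℕ} {Act : Type*}
    [TopologicalSpace Act] [CompactSpace Act] [Nonempty Act]
    (a : (Fin d → ℝ) → Matrix (Fin d) (Fin d) ℝ)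
    (hac : Continuous a) (hsymm : ∀ x, (a x).IsSymm)
    (b : (Fin d → ℝ) → Act → Fin d → ℝ)
    (hbc : Continuous fun q : (Fin d → ℝ) × Act => b q.1 q.2)
    (c : (Fin d → ℝ) → Act → ℝ)
    (hcc : Continuous fun q : (Fin d → ℝ) × Act => c q.1 q.2)
    (lamstar : ℝ)
    (Φ : ℝ → (Fin d → ℝ) → ℝ)
    (hΦcont : ContinuousOn (fun q : ℝ × (Fin d → ℝ) => Φ q.1 q.2)
      {q : ℝ × (Fin d → ℝ) | 0 ≤ q.1})
    (hΦpos : ∀ t, 0 ≤ t → ∀ x, 0 < Φ t x)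
    (hΦt : ∀ x, ∀ t ∈ Set.Ioi (0 : ℝ), DifferentiableAt ℝ (fun s => Φ s x) t)
    (hΦtc : ∀ x, ContinuousOn (fun t => deriv (fun s => Φ s x) t) (Set.Ioi (0 : ℝ)))
    (hΦx : ∀ t ∈ Set.Ioi (0 : ℝ), ContDiff ℝ 2 (Φ t))
    (hRVI : ∀ t ∈ Set.Ioi (0 : ℝ), ∀ x : Fin d → ℝ,
      deriv (fun s => Φ s x) t
        = (⨅ u : Act, ellOp a (fun y => b y u) (Φ t) x + c x u * Φ t x)
          - Φ t 0 * Φ t x)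
    (Φbar : ℝ → (Fin d → ℝ) → ℝ)
    (hΦbar : ∀ t x, Φbar t x
      = Φ t x * Real.exp (∫ s in (0 : ℝ)..t, (Φ s 0 - lamstar))) :
    (∀ x : Fin d → ℝ, Φbar 0 x = Φ 0 x) ∧
    ∀ t ∈ Set.Ioi (0 : ℝ), ∀ x : Fin d → ℝ,
      deriv (fun s => Φbar s x) t
        = (⨅ u : Act, ellOp a (fun y => b y u) (Φbar t) x + c x u * Φbar t x)
          - lamstar * Φbar t x := by
  have hΦ0 : ContinuousOn (fun s => Φ s 0) (Set.Ici 0) :=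
    hΦcont.comp (f := fun s : ℝ => (s, (0 : Fin d → ℝ))) (by fun_prop) fun _ hs => hs
  obtain ⟨hinit, hVI⟩ := rvi_pde_transforms_to_vi_pde_general (H := bellmanOp a b c)
    (fun _ hk => bellmanOp_const_smul a b c hk.le) hΦ0 lamstar
    (fun t ht x => (hΦt x t ht).hasDerivAt.congr_deriv (hRVI t ht x)) hΦbar
  exact ⟨hinit, fun t ht x => (hVI t ht x).deriv⟩
end
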